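/- arXiv:1409.5689 — 7 statements merged into one kernel-verified Lean document; each statement's English description precedes it below -/
import Mathlib

section
/- An operator A on a complex Banach space X is the generator of a holomorphic semigroup if and only if there exists ω ∈ ℝ such that {λ ∈ ℂ : Re λ > ω} ⊆ ρ(A) and sup_{Re λ > ω} ‖λ R(λ,A)‖ < ∞. Moreover, A generates a bounded holomorphic semigroup if and only if this holds with ω = 0. -/
open MeasureTheory Set

variable {X : Type*} [NormedAddCommGroup X] [NormedSpace ℂ X] [CompleteSpace X]

/-- `R` is the resolvent operator `R(l, A) = (l - A)⁻¹` of the (unbounded) operator `A`. -/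
def IsResolventOf (A : X →ₗ.[ℂ] X) (l : ℂ) (R : X →L[ℂ] X) : Prop :=
  (∀ x : X, ∃ hx : R x ∈ A.domain, l • R x - A ⟨R x, hx⟩ = x) ∧
  (∀ y : A.domain, R (l • (y : X) - A y) = (y : X))

/-- `T` is a semigroup of type `(M, ω)`. -/
def IsSemigroupOfType (T : ℝ → X →L[ℂ] X) (M ω : ℝ) : Prop :=
  (∀ x : X, ContinuousOn (fun t => T t x) (Set.Ioi 0)) ∧
  (∀ s t : ℝ, 0 < s → 0 < t → T (s + t) = (T s).comp (T t)) ∧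
  (0 < M ∧ ∀ t : ℝ, 0 < t → ‖T t‖ ≤ M * Real.exp (ω * t)) ∧
  (∀ x : X, (∀ t : ℝ, 0 < t → T t x = 0) → x = 0)

/-- `A` is the generator of the semigroup `T` of type `(M, ω)`. -/
def IsGeneratorOf (A : X →ₗ.[ℂ] X) (T : ℝ → X →L[ℂ] X) (ω : ℝ) : Prop :=
  ∀ l : ℝ, ω < l → ∃ R : X →L[ℂ] X, IsResolventOf A (l : ℂ) R ∧
    ∀ x : X, R x = ∫ t in Set.Ioi (0 : ℝ), Real.exp (-l * t) • T t x

/-- `A` generates the semigroup `T` (of some type `(M, ω)`). -/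
def Generates (A : X →ₗ.[ℂ] X) (T : ℝ → X →L[ℂ] X) : Prop :=
  ∃ M ω : ℝ, IsSemigroupOfType T M ω ∧ IsGeneratorOf A T ω

/-- The open sector `Σ_θ = {r e^{iφ} : r > 0, |φ| < θ}`. -/
def Sector (θ : ℝ) : Set ℂ := {z : ℂ | z ≠ 0 ∧ |Complex.arg z| < θ}

/-- The semigroup `T` is holomorphic: it extends to a holomorphic function on a sector
`Σ_θ` (for some `0 < θ ≤ π/2`) which is bounded on `Σ_θ ∩ {|z| ≤ 1}`. -/
def IsHolomorphicSG (T : ℝ → X →L[ℂ] X) : Prop :=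
  ∃ θ : ℝ, 0 < θ ∧ θ ≤ Real.pi / 2 ∧ ∃ S : ℂ → X →L[ℂ] X,
    DifferentiableOn ℂ S (Sector θ) ∧
    (∀ t : ℝ, 0 < t → S (t : ℂ) = T t) ∧
    (∃ C : ℝ, ∀ z ∈ Sector θ, ‖z‖ ≤ 1 → ‖S z‖ ≤ C)

/-- The semigroup `T` is bounded holomorphic: it extends to a bounded holomorphic function
on a sector `Σ_θ` for some `0 < θ ≤ π/2`. -/
def IsBoundedHolomorphicSG (T : ℝ → X →L[ℂ] X) : Prop :=
  ∃ θ : ℝ, 0 < θ ∧ θ ≤ Real.pi / 2 ∧ ∃ S : ℂ → X →L[ℂ] X,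
    DifferentiableOn ℂ S (Sector θ) ∧
    (∀ t : ℝ, 0 < t → S (t : ℂ) = T t) ∧
    (∃ C : ℝ, ∀ z ∈ Sector θ, ‖S z‖ ≤ C)

set_option linter.unusedSectionVars false
open Filter Topology

/-! ### Cones -/

/-- The open cone `|Im z| < a Re z`. -/
def HCone (a : ℝ) : Set ℂ := {z : ℂ | |z.im| < a * z.re}

lemma HCone.re_pos {a : ℝ} (ha : 0 < a) {z : ℂ} (hz : z ∈ HCone a) : 0 < z.re := by
  have h : |z.im| < a * z.re := hz
  have := abs_nonneg z.im
  by_contra hcon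
  push Not at hcon
  nlinarith

lemma HCone.ne_zero {a : ℝ} (ha : 0 < a) {z : ℂ} (hz : z ∈ HCone a) : z ≠ 0 := by
  rintro rfl
  have := HCone.re_pos ha hz
  simp at this

lemma isOpen_HCone (a : ℝ) : IsOpen (HCone a) :=
  isOpen_lt (by fun_prop) (by fun_prop)

lemma HCone.add {a : ℝ} {z w : ℂ} (hz : z ∈ HCone a) (hw : w ∈ HCone a) : z + w ∈ HCone a := by
  have h1 : |z.im| < a * z.re := hz
  have h2 : |w.im| < a * w.re := hw
  have := abs_add_le z.im w.im
  change |(z + w).im| < a * (z + w).re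
  simp only [Complex.add_im, Complex.add_re]
  nlinarith

lemma HCone.smul {a : ℝ} {z : ℂ} {t : ℝ} (ht : 0 < t) (hz : z ∈ HCone a) :
    (t : ℂ) * z ∈ HCone a := by
  have h1 : |z.im| < a * z.re := hz
  change |((t : ℂ) * z).im| < a * ((t : ℂ) * z).re
  simp only [Complex.re_ofReal_mul, Complex.im_ofReal_mul, abs_mul, abs_of_pos ht]
  nlinarith

lemma HCone.ofReal {a : ℝ} (ha : 0 < a) {t : ℝ} (ht : 0 < t) : (t : ℂ) ∈ HCone a := by
  change |((t : ℂ)).im| < a * ((t : ℂ)).re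
  simp; positivity

lemma convex_HCone {a : ℝ} : Convex ℝ (HCone a) := by
  intro z hz w hw s t hs ht hst
  rcases hs.eq_or_lt with rfl | hs
  · have : t = 1 := by linarith
    subst this; simpa using hw
  rcases ht.eq_or_lt with rfl | ht
  · have : s = 1 := by linarith
    subst this; simpa using hz
  simpa using HCone.add (HCone.smul hs hz) (HCone.smul ht hw)

lemma exists_HCone_subset_Sector {θ : ℝ} (h0 : 0 < θ) (h1 : θ ≤ Real.pi / 2) :
    ∃ a : ℝ, 0 < a ∧ HCone a ⊆ Sector θ := by
  have hp := Real.pi_pos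
  have ha : 0 < Real.tan (θ / 2) := Real.tan_pos_of_pos_of_lt_pi_div_two (by linarith) (by linarith)
  refine ⟨Real.tan (θ / 2), ha, fun z hz => ?_⟩
  have hre := HCone.re_pos ha hz
  refine ⟨HCone.ne_zero ha hz, ?_⟩
  have hz' : |z.im| < Real.tan (θ / 2) * z.re := hz
  have harg : |Complex.arg z| < Real.pi / 2 := Complex.abs_arg_lt_pi_div_two_iff.2 (Or.inl hre)
  by_contra hcon
  push Not at hcon
  have key : Real.tan (θ / 2) < |Real.tan (Complex.arg z)| := by
    rcases le_total 0 (Complex.arg z) with h | h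
    · rw [abs_of_nonneg h] at hcon harg
      exact lt_of_lt_of_le (Real.tan_lt_tan_of_nonneg_of_lt_pi_div_two (by linarith) harg
        (by linarith)) (le_abs_self _)
    · rw [abs_of_nonpos h] at hcon harg
      rw [← abs_neg, ← Real.tan_neg]
      exact lt_of_lt_of_le (Real.tan_lt_tan_of_nonneg_of_lt_pi_div_two (by linarith) harg
        (by linarith)) (le_abs_self _)
  rw [Complex.tan_arg, abs_div, abs_of_pos hre, lt_div_iff₀ hre] at key
  linarith

lemma exists_Sector_subset_HCone {a : ℝ} (ha : 0 < a) :
    ∃ θ : ℝ, 0 < θ ∧ θ ≤ Real.pi / 2 ∧ Sector θ ⊆ HCone a := by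
  have hp := Real.pi_pos
  refine ⟨Real.arctan a, Real.arctan_pos.2 ha, (Real.arctan_lt_pi_div_two a).le, fun z hz => ?_⟩
  obtain ⟨hz0, hz1⟩ := hz
  have hpi := Real.arctan_lt_pi_div_two a
  have hre : 0 < z.re :=
    (Complex.abs_arg_lt_pi_div_two_iff.1 (hz1.trans hpi)).resolve_right hz0
  change |z.im| < a * z.re
  rw [abs_lt] at hz1
  have h1 : Real.tan (Complex.arg z) < a := by
    have := Real.tan_lt_tan_of_lt_of_lt_pi_div_two (by linarith) hpi hz1.2
    rwa [Real.tan_arctan] at this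
  have h2 : -a < Real.tan (Complex.arg z) := by
    have := Real.tan_lt_tan_of_lt_of_lt_pi_div_two (by linarith) (by linarith) hz1.1
    rwa [Real.tan_neg, Real.tan_arctan] at this
  rw [Complex.tan_arg] at h1 h2
  rw [div_lt_iff₀ hre] at h1
  rw [lt_div_iff₀ hre] at h2
  rw [abs_lt]; constructor <;> linarith

/-- Identity theorem on the cone. -/
lemma HCone.eqOn {E : Type*} [NormedAddCommGroup E] [NormedSpace ℂ E] [CompleteSpace E]
    {a : ℝ} (ha : 0 < a) {f g : ℂ → E}
    (hf : DifferentiableOn ℂ f (HCone a)) (hg : DifferentiableOn ℂ g (HCone a))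
    (h : ∀ t : ℝ, 0 < t → f t = g t) : EqOn f g (HCone a) := by
  refine (hf.analyticOnNhd (isOpen_HCone a)).eqOn_of_preconnected_of_frequently_eq
    (hg.analyticOnNhd (isOpen_HCone a)) convex_HCone.isPreconnected
    (z₀ := ((1 : ℝ) : ℂ)) (HCone.ofReal ha one_pos) ?_
  have hlim : Tendsto (fun t : ℝ => (t : ℂ)) (𝓝[>] (1 : ℝ)) (𝓝[≠] ((1 : ℝ) : ℂ)) := by
    refine tendsto_nhdsWithin_iff.2 ⟨?_, ?_⟩
    · exact (Complex.continuous_ofReal.tendsto 1).mono_left nhdsWithin_le_nhds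
    · filter_upwards [self_mem_nhdsWithin] with t ht
      simp only [mem_compl_iff, mem_singleton_iff, Complex.ofReal_inj]
      exact (ne_of_gt ht)
  refine hlim.frequently (Eventually.frequently ?_)
  filter_upwards [self_mem_nhdsWithin] with t ht
  exact h t (zero_lt_one.trans ht)

/-! ### Resolvents -/

lemma IsResolventOf.identity {A : X →ₗ.[ℂ] X} {l m : ℂ} {R Q : X →L[ℂ] X}
    (hR : IsResolventOf A m R) (hQ : IsResolventOf A l Q) : Q - R = (m - l) • (Q * R) := by
  ext x
  obtain ⟨hx, h⟩ := hR.1 x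
  have h2 := hQ.2 ⟨R x, hx⟩
  have e : l • R x - A ⟨R x, hx⟩ = (l - m) • R x + x := by
    nth_rewrite 4 [← h]; module
  simp only at h2
  rw [e, map_add, map_smul] at h2
  change Q x - R x = (m - l) • Q (R x)
  calc Q x - R x = Q x - ((l - m) • Q (R x) + Q x) := by rw [h2]
    _ = (m - l) • Q (R x) := by module

lemma IsResolventOf.injective {A : X →ₗ.[ℂ] X} {l : ℂ} {R : X →L[ℂ] X}
    (hR : IsResolventOf A l R) {x : X} (hx : R x = 0) : x = 0 := by
  obtain ⟨hx', h⟩ := hR.1 x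
  have : (⟨R x, hx'⟩ : A.domain) = 0 := Subtype.ext hx
  rw [this, hx] at h
  simpa using h.symm

lemma IsResolventOf.of_identity {A : X →ₗ.[ℂ] X} {l m : ℂ} {R Q : X →L[ℂ] X}
    (hR : IsResolventOf A m R) (h1 : Q = R + (m - l) • (R * Q))
    (h2 : Q = R + (m - l) • (Q * R)) : IsResolventOf A l Q := by
  constructor
  · intro x
    have e : Q x = R (x + (m - l) • Q x) := by
      conv_lhs => rw [h1]
      simp
    obtain ⟨hx, h⟩ := hR.1 (x + (m - l) • Q x)
    have hQ : Q x ∈ A.domain := by rw [e]; exact hx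
    refine ⟨hQ, ?_⟩
    have e2 : (⟨Q x, hQ⟩ : A.domain) = ⟨R (x + (m - l) • Q x), hx⟩ := Subtype.ext e
    rw [← e2] at h
    have h' : m • Q x - A ⟨Q x, hQ⟩ = x + (m - l) • Q x := by
      rw [← h, ← e]
    have : A ⟨Q x, hQ⟩ = m • Q x - (x + (m - l) • Q x) := by
      rw [← h']; module
    rw [this]; module
  · intro y
    have hy := hR.2 y
    have e : ∀ w, Q w = R w + (m - l) • Q (R w) := fun w => by
      conv_lhs => rw [h2]
      simp
    have e1 := e (m • (y : X) - A y)
    rw [hy] at e1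
    have : l • (y : X) - A y = (m • (y : X) - A y) - (m - l) • (y : X) := by module
    rw [this, map_sub, e1, map_smul]; module

/-- Neumann series extension of the resolvent. -/
lemma IsResolventOf.extend {A : X →ₗ.[ℂ] X} {l m : ℂ} {R : X →L[ℂ] X}
    (hR : IsResolventOf A m R) (h : ‖(m - l) • R‖ ≤ 1 / 2) :
    ∃ Q : X →L[ℂ] X, IsResolventOf A l Q ∧ ‖Q‖ ≤ 2 * ‖R‖ := by
  set B := (m - l) • R with hB
  have hB1 : ‖B‖ < 1 := by linarith
  set N := ∑' n : ℕ, B ^ n with hN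
  have hN1 : (1 - B) * N = 1 := mul_neg_geom_series B hB1
  have hN2 : N * (1 - B) = 1 := geom_series_mul_neg B hB1
  have hRB : R * (1 - B) = (1 - B) * R := by
    rw [hB]; simp [mul_sub, sub_mul]
  have hcomm : R * N = N * R := by
    calc R * N = N * (1 - B) * (R * N) := by rw [hN2, one_mul]
      _ = N * ((1 - B) * R) * N := by simp only [mul_assoc]
      _ = N * R * ((1 - B) * N) := by rw [← hRB]; simp only [mul_assoc]
      _ = N * R := by rw [hN1, mul_one]
  have hq : R * N = R + (m - l) • (R * (R * N)) := by
    have h1 : R * ((1 - B) * N) = R := by rw [hN1, mul_one]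
    have h2 : R * ((1 - B) * N) = R * N - (m - l) • (R * (R * N)) := by
      rw [sub_mul, one_mul, mul_sub, hB, smul_mul_assoc, mul_smul_comm]
    rw [h2] at h1
    exact sub_eq_iff_eq_add.1 h1
  have hle : ‖R * N‖ ≤ 2 * ‖R‖ := by
    have : ‖(m - l) • (R * (R * N))‖ ≤ 1 / 2 * ‖R * N‖ := by
      rw [← smul_mul_assoc]
      exact (norm_mul_le _ _).trans (mul_le_mul_of_nonneg_right h (norm_nonneg _))
    have h3 : ‖R * N‖ ≤ ‖R‖ + ‖(m - l) • (R * (R * N))‖ := by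
      conv_lhs => rw [hq]
      exact norm_add_le _ _
    linarith
  refine ⟨R * N, hR.of_identity hq ?_, hle⟩
  rw [mul_assoc, ← hcomm]
  exact hq

/-- Fundamental theorem of calculus on the half line. -/
lemma integral_Ioi_deriv {E : Type*} [NormedAddCommGroup E] [NormedSpace ℝ E] [CompleteSpace E]
    {F F' : ℝ → E} {L : E} (hd : ∀ t, 0 < t → HasDerivAt F (F' t) t)
    (hi : IntegrableOn F' (Ioi 0)) (h0 : Tendsto F (𝓝[>] 0) (𝓝 L))
    (hinf : Tendsto F atTop (𝓝 0)) : ∫ t in Ioi (0 : ℝ), F' t = -L := by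
  classical
  have hG : ∀ t : ℝ, 0 < t → Function.update F 0 L =ᶠ[𝓝 t] F := fun t ht => by
    filter_upwards [isOpen_ne.mem_nhds ht.ne'] with s hs
    exact Function.update_of_ne hs _ _
  have := integral_Ioi_of_hasDerivAt_of_tendsto (f := Function.update F 0 L) (f' := F') (a := 0)
    (m := 0) ?_ (fun t ht => (hd t ht).congr_of_eventuallyEq (hG t ht)) hi ?_
  · simpa using this
  · rw [continuousWithinAt_update_same]
    simpa using h0
  · refine hinf.congr' ?_
    filter_upwards [eventually_gt_atTop 0] with t ht
    exact (Function.update_of_ne ht.ne' _ _).symm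

/-! ### The forward direction -/

section Laplace

variable {E : Type*} [NormedRing E] [NormedAlgebra ℂ E] [CompleteSpace E]

lemma norm_cexp_mul_real (l : ℂ) (t : ℝ) : ‖Complex.exp (l * t)‖ = Real.exp (l.re * t) := by
  rw [Complex.norm_exp]; simp

lemma integrableOn_exp_smul {T : ℝ → E} {M w : ℝ} {l : ℂ} (hl : w < l.re)
    (hc : ContinuousOn T (Ioi 0)) (hb : ∀ t, 0 < t → ‖T t‖ ≤ M * Real.exp (w * t)) :
    IntegrableOn (fun t : ℝ => Complex.exp (-l * t) • T t) (Ioi 0) := by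
  have h1 : IntegrableOn (fun t : ℝ => M * Real.exp ((w - l.re) * t)) (Ioi 0) :=
    (integrableOn_exp_mul_Ioi (by linarith) 0).const_mul M
  refine Integrable.mono' h1 ?_ ?_
  · refine ContinuousOn.aestronglyMeasurable ?_ measurableSet_Ioi
    exact ContinuousOn.smul (by fun_prop) hc
  · refine (ae_restrict_mem measurableSet_Ioi).mono fun t ht => ?_
    rw [norm_smul, norm_cexp_mul_real]
    calc Real.exp ((-l).re * t) * ‖T t‖ ≤ Real.exp ((-l).re * t) * (M * Real.exp (w * t)) :=
          mul_le_mul_of_nonneg_left (hb t ht) (Real.exp_pos _).le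
      _ = M * Real.exp ((w - l.re) * t) := by
          rw [mul_left_comm, ← Real.exp_add]; congr 2; simp; ring

lemma norm_integral_exp_smul_le {T : ℝ → E} {M w : ℝ} {l : ℂ} (hl : w < l.re)
    (hb : ∀ t, 0 < t → ‖T t‖ ≤ M * Real.exp (w * t)) :
    ‖∫ t in Ioi (0 : ℝ), Complex.exp (-l * t) • T t‖ ≤ M / (l.re - w) := by
  have h1 : IntegrableOn (fun t : ℝ => M * Real.exp ((w - l.re) * t)) (Ioi 0) :=
    (integrableOn_exp_mul_Ioi (by linarith) 0).const_mul M
  have h2 : ∫ t in Ioi (0 : ℝ), M * Real.exp ((w - l.re) * t) = M / (l.re - w) := by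
    rw [integral_const_mul, integral_exp_mul_Ioi (by linarith)]
    have : l.re - w ≠ 0 := by linarith
    have : w - l.re ≠ 0 := by linarith
    simp only [mul_zero, Real.exp_zero]
    field_simp
    ring
  rw [← h2]
  refine norm_integral_le_of_norm_le h1 ?_
  refine (ae_restrict_mem measurableSet_Ioi).mono fun t ht => ?_
  rw [norm_smul, norm_cexp_mul_real]
  calc Real.exp ((-l).re * t) * ‖T t‖ ≤ Real.exp ((-l).re * t) * (M * Real.exp (w * t)) :=
        mul_le_mul_of_nonneg_left (hb t ht) (Real.exp_pos _).le
    _ = M * Real.exp ((w - l.re) * t) := by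
        rw [mul_left_comm, ← Real.exp_add]; congr 2; simp; ring

lemma mul_laplace {T : ℝ → E} {l : ℂ}
    (hi : IntegrableOn (fun t : ℝ => Complex.exp (-l * t) • T t) (Ioi 0)) (B : E) :
    B * (∫ t in Ioi (0 : ℝ), Complex.exp (-l * t) • T t) =
      ∫ t in Ioi (0 : ℝ), Complex.exp (-l * t) • (B * T t) := by
  have := ((ContinuousLinearMap.mul ℂ E) B).integral_comp_comm hi
  simp only [ContinuousLinearMap.mul_apply', mul_smul_comm] at this
  exact this.symm

lemma laplace_mul {T : ℝ → E} {l : ℂ}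
    (hi : IntegrableOn (fun t : ℝ => Complex.exp (-l * t) • T t) (Ioi 0)) (B : E) :
    (∫ t in Ioi (0 : ℝ), Complex.exp (-l * t) • T t) * B =
      ∫ t in Ioi (0 : ℝ), Complex.exp (-l * t) • (T t * B) := by
  have := ((ContinuousLinearMap.mul ℂ E).flip B).integral_comp_comm hi
  simp only [ContinuousLinearMap.mul_apply', ContinuousLinearMap.flip_apply,
    smul_mul_assoc] at this
  exact this.symm

lemma semigroup_mul_laplace {T : ℝ → E} {M w : ℝ} {l : ℂ} (hl : w < l.re)
    (hc : ContinuousOn T (Ioi 0)) (hb : ∀ t, 0 < t → ‖T t‖ ≤ M * Real.exp (w * t))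
    (hs : ∀ s t, 0 < s → 0 < t → T (s + t) = T s * T t) {R : E}
    (hR : R = ∫ t in Ioi (0 : ℝ), Complex.exp (-l * t) • T t) :
    (∀ s, 0 < s → T s * R = R * T s) ∧
    (∀ s, 0 < s → HasDerivAt (fun s => T s * R) (T s * (l • R - 1)) s) ∧
    Tendsto (fun s => T s * R) (𝓝[>] 0) (𝓝 R) := by
  have hi := integrableOn_exp_smul hl hc hb
  set g : ℝ → E := fun t : ℝ => Complex.exp (-l * t) • T t with hg
  set G : ℝ → E := indicator (Ioi 0) g with hG
  have hGi : Integrable G := (integrable_indicator_iff measurableSet_Ioi).2 hi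
  have hRG : R = ∫ t in Ioi (0 : ℝ), G t := by
    rw [hR]; refine setIntegral_congr_fun measurableSet_Ioi fun t ht => ?_
    simp only [hG]; rw [indicator_of_mem ht]
  have key : ∀ s, 0 < s → T s * R = Complex.exp (l * s) • (R - ∫ t in (0 : ℝ)..s, G t) := by
    intro s hs0
    have e1 : T s * R = ∫ t in Ioi (0 : ℝ), Complex.exp (l * s) • G (t + s) := by
      rw [hR, mul_laplace hi]
      refine setIntegral_congr_fun measurableSet_Ioi fun t ht => ?_
      have ht' : 0 < t := ht
      have hts : t + s ∈ Ioi (0 : ℝ) := by simp only [mem_Ioi]; linarith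
      simp only [hG]
      rw [indicator_of_mem hts, ← hs s t hs0 ht]
      simp only [hg, smul_smul, ← Complex.exp_add, add_comm s t]
      congr 2; push_cast; ring
    have e2 : ∫ t in Ioi (0 : ℝ), G (t + s) = ∫ t in Ioi s, G t := by
      have := (measurePreserving_add_right volume s).setIntegral_preimage_emb
        (measurableEmbedding_addRight s) G (Ioi s)
      simpa using this
    have e3 : (∫ t in (0 : ℝ)..s, G t) + ∫ t in Ioi s, G t = ∫ t in Ioi (0 : ℝ), G t :=
      intervalIntegral.integral_interval_add_Ioi hGi.integrableOn hGi.integrableOn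
    rw [e1, integral_smul, e2, hRG, ← e3]
    simp
  refine ⟨fun s hs0 => ?_, fun s hs0 => ?_, ?_⟩
  · rw [hR, mul_laplace hi, laplace_mul hi]
    refine setIntegral_congr_fun measurableSet_Ioi fun t ht => ?_
    rw [← hs s t hs0 ht, add_comm, hs t s ht hs0]
  · have hgc : ContinuousOn g (Ioi 0) := ContinuousOn.smul (by fun_prop) hc
    have hev : G =ᶠ[𝓝 s] g := by
      filter_upwards [isOpen_Ioi.mem_nhds hs0] with t ht
      simp only [hG]; rw [indicator_of_mem ht]
    have hGc : ContinuousAt G s := (hgc.continuousAt (isOpen_Ioi.mem_nhds hs0)).congr hev.symm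
    have hP : HasDerivAt (fun s => ∫ t in (0 : ℝ)..s, G t) (G s) s :=
      intervalIntegral.integral_hasDerivAt_right hGi.intervalIntegrable
        hGi.aestronglyMeasurable.stronglyMeasurableAtFilter hGc
    have hexp : HasDerivAt (fun s : ℝ => Complex.exp (l * s)) (Complex.exp (l * s) * l) s := by
      have : HasDerivAt (fun s : ℝ => l * (s : ℂ)) l s := by
        simpa using (Complex.ofRealCLM.hasDerivAt (x := s)).const_mul l
      exact this.cexp
    have hD := hexp.smul (hP.const_sub R)
    have hD2 := hD.congr_of_eventuallyEq (f₁ := fun s => T s * R) (by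
      filter_upwards [isOpen_Ioi.mem_nhds hs0] with t ht
      exact key t ht)
    refine hD2.congr_deriv (Eq.symm ?_)
    rw [hev.eq_of_nhds, mul_sub, mul_smul_comm, key s hs0, mul_one, hg]
    simp only [smul_neg, smul_smul, ← Complex.exp_add]
    rw [show l * (s : ℂ) + -l * s = 0 by ring, Complex.exp_zero, one_smul, mul_comm l]
    abel
  · have hP : Continuous (fun s => ∫ t in (0 : ℝ)..s, G t) :=
      intervalIntegral.continuous_primitive (fun a b => hGi.intervalIntegrable) 0
    have hcont : Continuous (fun s : ℝ => Complex.exp (l * s) • (R - ∫ t in (0 : ℝ)..s, G t)) := by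
      fun_prop
    have := (hcont.tendsto 0).mono_left (nhdsWithin_le_nhds (s := Ioi 0))
    simp only [Complex.ofReal_zero, mul_zero, Complex.exp_zero, intervalIntegral.integral_same,
      sub_zero, one_smul] at this
    refine this.congr' ?_
    filter_upwards [self_mem_nhdsWithin] with s hs0
    exact (key s hs0).symm

end Laplace

section Forward

variable {E : Type*} [NormedRing E] [NormedAlgebra ℂ E] [CompleteSpace E]

lemma exists_direction {b : ℝ} (hb : 0 < b) (l : ℂ) (hl : 0 < l.re) :
    ∃ d : ℂ, d ∈ HCone (2 * b) ∧ ‖d‖ ≤ 1 + b ∧ min 1 b * ‖l‖ ≤ (l * d).re := by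
  have hn : ‖l‖ ≤ |l.re| + |l.im| := Complex.norm_le_abs_re_add_abs_im l
  have h1 : min 1 b ≤ 1 := min_le_left _ _
  have h2 : min 1 b ≤ b := min_le_right _ _
  have h3 : 0 < min 1 b := lt_min one_pos hb
  rw [abs_of_pos hl] at hn
  have hfin : min 1 b * ‖l‖ ≤ l.re + b * |l.im| := by
    have := abs_nonneg l.im
    nlinarith
  rcases le_total 0 l.im with h | h
  · refine ⟨⟨1, -b⟩, ?_, ?_, ?_⟩
    · change |(-b)| < 2 * b * 1
      rw [abs_neg, abs_of_pos hb]; linarith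
    · refine (Complex.norm_le_abs_re_add_abs_im _).trans ?_
      simp [abs_of_pos hb]
    · rw [abs_of_nonneg h] at hfin
      simp only [Complex.mul_re]; linarith
  · refine ⟨⟨1, b⟩, ?_, ?_, ?_⟩
    · change |b| < 2 * b * 1
      rw [abs_of_pos hb]; linarith
    · refine (Complex.norm_le_abs_re_add_abs_im _).trans ?_
      simp [abs_of_pos hb]
    · rw [abs_of_nonpos h] at hfin
      simp only [Complex.mul_re]; linarith

lemma hasDerivAt_cexp_mul (l : ℂ) (s : ℝ) :
    HasDerivAt (fun s : ℝ => Complex.exp (l * s)) (Complex.exp (l * s) * l) s := by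
  have : HasDerivAt (fun s : ℝ => l * (s : ℂ)) l s := by
    simpa using (Complex.ofRealCLM.hasDerivAt (x := s)).const_mul l
  exact this.cexp

/-- Chain rule along a ray. -/
lemma hasDerivAt_ray {H : ℂ → E} {H' : E} {d : ℂ} {t : ℝ} (h : HasDerivAt H H' ((t : ℂ) * d)) :
    HasDerivAt (fun s : ℝ => H ((s : ℂ) * d)) (d • H') t := by
  have h1 : HasDerivAt (fun s : ℝ => (s : ℂ) * d) d t := by
    simpa using (Complex.ofRealCLM.hasDerivAt (x := t)).mul_const d
  exact HasDerivAt.scomp t h h1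

lemma forward_core {T : ℝ → E} {M w₀ : ℝ} {m : ℂ} (hm : w₀ < m.re)
    (hbT : ∀ t, 0 < t → ‖T t‖ ≤ M * Real.exp (w₀ * t))
    (hs : ∀ s t, 0 < s → 0 < t → T (s + t) = T s * T t) {R : E}
    (hR : R = ∫ t in Ioi (0 : ℝ), Complex.exp (-m * t) • T t)
    {S : ℂ → E} {a : ℝ} (ha : 0 < a) (hS : DifferentiableOn ℂ S (HCone a))
    (hST : ∀ t : ℝ, 0 < t → S t = T t) {M' w : ℝ} (hw : 0 ≤ w)
    (hb : ∀ z ∈ HCone a, ‖S z‖ ≤ M' * Real.exp (w * ‖z‖)) :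
    ∃ c : ℝ, 0 < c ∧ ∃ C : ℝ, ∀ l : ℂ, 0 < l.re → 2 * w < c * ‖l‖ →
      ∃ Q : E, Q = R + (m - l) • (R * Q) ∧ Q = R + (m - l) • (Q * R) ∧ ‖l • Q‖ ≤ C := by
  have hM' : 0 ≤ M' := by
    have h1 := (norm_nonneg _).trans (hb _ (HCone.ofReal ha one_pos))
    exact nonneg_of_mul_nonneg_left h1 (Real.exp_pos _)
  have hopen := isOpen_HCone a
  have hreal : ∀ t : ℝ, 0 < t → (t : ℂ) ∈ HCone a := fun t ht => HCone.ofReal ha ht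
  have hSd : ∀ z ∈ HCone a, HasDerivAt S (deriv S z) z := fun z hz =>
    ((hS z hz).differentiableAt (hopen.mem_nhds hz)).hasDerivAt
  have hcT : ContinuousOn T (Ioi 0) := by
    have : ContinuousOn (fun t : ℝ => S t) (Ioi 0) :=
      hS.continuousOn.comp (by fun_prop) (fun t ht => hreal t ht)
    exact this.congr fun t ht => (hST t ht).symm
  obtain ⟨hcomm, hder, hlim⟩ := semigroup_mul_laplace hm hcT hbT hs hR
  have hcommS : EqOn (fun z => S z * R) (fun z => R * S z) (HCone a) := by
    refine HCone.eqOn ha (hS.mul_const R) (hS.const_mul R) fun t ht => ?_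
    simp only [hST t ht]
    exact hcomm t ht
  have hderS : EqOn (fun z => deriv S z * R) (fun z => S z * (m • R - 1)) (HCone a) := by
    refine HCone.eqOn ha ((hS.deriv hopen).mul_const R) (hS.mul_const _) fun t ht => ?_
    have h1 : HasDerivAt (fun s : ℝ => S s * R) (deriv S t * R) t :=
      HasDerivAt.mul_const (by
        have := hasDerivAt_ray (H := S) (H' := deriv S t) (d := 1) (t := t)
          (by simpa using hSd t (hreal t ht))
        simpa using this) R
    have h2 := hder t ht
    have h3 : HasDerivAt (fun s : ℝ => S s * R) (T t * (m • R - 1)) t := by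
      refine h2.congr_of_eventuallyEq ?_
      filter_upwards [isOpen_Ioi.mem_nhds ht] with s hs
      rw [hST s hs]
    rw [h1.unique h3, hST t ht]
  have hH : ∀ z ∈ HCone a, HasDerivAt (fun z => S z * R) (S z * (m • R - 1)) z := by
    intro z hz
    exact ((hSd z hz).mul_const R).congr_deriv (hderS hz)
  set b := a / 2 with hbdef
  have hb0 : 0 < b := by positivity
  have h2b : 2 * b = a := by rw [hbdef]; ring
  set c₀ := min 1 b with hc₀
  have hc₀pos : 0 < c₀ := lt_min one_pos hb0
  refine ⟨c₀ / (1 + b), by positivity, (1 + b) * (2 * M' / c₀), fun l hl hlw => ?_⟩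
  obtain ⟨d, hdK, hdn, hdre⟩ := exists_direction hb0 l hl
  rw [h2b] at hdK
  have hl0 : 0 < ‖l‖ := by
    rw [norm_pos_iff]; rintro rfl; simp at hl
  have hray : ∀ t : ℝ, 0 < t → (t : ℂ) * d ∈ HCone a := fun t ht => HCone.smul ht hdK
  have hwd : w * ‖d‖ ≤ c₀ * ‖l‖ / 2 := by
    have h1 : w * ‖d‖ ≤ w * (1 + b) := mul_le_mul_of_nonneg_left hdn hw
    have h2 : 2 * w * (1 + b) < c₀ * ‖l‖ := by
      rw [div_mul_eq_mul_div, lt_div_iff₀ (by positivity)] at hlw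
      exact hlw
    linarith
  have hcl : 0 < c₀ * ‖l‖ := by positivity
  have hgap : c₀ * ‖l‖ / 2 ≤ (l * d).re - w * ‖d‖ := by linarith
  have hlt : w * ‖d‖ < (l * d).re := by linarith
  have hc2 : ContinuousOn (fun t : ℝ => S ((t : ℂ) * d)) (Ioi 0) :=
    hS.continuousOn.comp (by fun_prop) (fun t ht => hray t ht)
  have hb2 : ∀ t : ℝ, 0 < t → ‖S ((t : ℂ) * d)‖ ≤ M' * Real.exp (w * ‖d‖ * t) := by
    intro t ht
    refine (hb _ (hray t ht)).trans_eq ?_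
    rw [norm_mul, Complex.norm_real, Real.norm_of_nonneg ht.le]
    congr 2; ring
  have hi := integrableOn_exp_smul hlt hc2 hb2
  set Q₀ := ∫ t in Ioi (0 : ℝ), Complex.exp (-(l * d) * t) • S ((t : ℂ) * d) with hQ₀
  have hQ₀n : ‖Q₀‖ ≤ 2 * M' / (c₀ * ‖l‖) := by
    refine (norm_integral_exp_smul_le hlt hb2).trans ?_
    rw [div_le_div_iff₀ (by linarith) hcl]
    nlinarith
  have hQR : Q₀ * R = R * Q₀ := by
    rw [hQ₀, mul_laplace hi, laplace_mul hi]
    refine setIntegral_congr_fun measurableSet_Ioi fun t ht => ?_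
    have := hcommS (hray t ht)
    simp only at this ⊢
    rw [this]
  have hintg : Q₀ * (d • ((m - l) • R - 1)) = -R := by
    rw [hQ₀, laplace_mul hi]
    have hi2 : IntegrableOn (fun t : ℝ => Complex.exp (-(l * d) * t) •
        (S ((t : ℂ) * d) * (d • ((m - l) • R - 1)))) (Ioi 0) := by
      have := ((ContinuousLinearMap.mul ℂ E).flip (d • ((m - l) • R - 1))).integrable_comp hi
      simp only [ContinuousLinearMap.mul_apply', ContinuousLinearMap.flip_apply,
        smul_mul_assoc] at this
      exact this
    refine integral_Ioi_deriv
      (F := fun t : ℝ => Complex.exp (-(l * d) * t) • (S ((t : ℂ) * d) * R)) ?_ hi2 ?_ ?_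
    · intro t ht
      have h1 := hasDerivAt_cexp_mul (-(l * d)) t
      have h2 := hasDerivAt_ray (hH _ (hray t ht))
      refine (h1.smul h2).congr_deriv ?_
      simp only [mul_smul_comm, mul_sub, mul_one, smul_sub, smul_smul, sub_smul, mul_sub, neg_smul,
        mul_neg]
      rw [show Complex.exp (-(l * d) * t) * (l * d) = Complex.exp (-(l * d) * t) * (d * l) by ring]
      abel
    · have hclose : Tendsto (fun t : ℝ => S ((t : ℂ) * d) * R - T t * R) (𝓝[>] 0) (𝓝 0) := by
        set D := M' * Real.exp (w * (1 + b)) * ‖m • R - 1‖ with hD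
        have hbound : ∀ t : ℝ, 0 < t → t ≤ 1 →
            ‖S ((t : ℂ) * d) * R - T t * R‖ ≤ D * ‖d - 1‖ * t := by
          intro t ht ht1
          have hconv : Convex ℝ (HCone a ∩ Metric.closedBall 0 (1 + b)) :=
            convex_HCone.inter (convex_closedBall _ _)
          have hmem1 : (t : ℂ) ∈ HCone a ∩ Metric.closedBall 0 (1 + b) := by
            refine ⟨hreal t ht, ?_⟩
            simp only [Metric.mem_closedBall, dist_zero_right, Complex.norm_real,
              Real.norm_of_nonneg ht.le]
            linarith
          have hmem2 : (t : ℂ) * d ∈ HCone a ∩ Metric.closedBall 0 (1 + b) := by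
            refine ⟨hray t ht, ?_⟩
            simp only [Metric.mem_closedBall, dist_zero_right, norm_mul, Complex.norm_real,
              Real.norm_of_nonneg ht.le]
            have := norm_nonneg d
            nlinarith
          have := hconv.norm_image_sub_le_of_norm_hasDerivWithin_le (C := D)
            (fun z hz => (hH z hz.1).hasDerivWithinAt) (fun z hz => ?_) hmem1 hmem2
          · simp only [hST t ht] at this
            refine this.trans_eq ?_
            rw [show (t : ℂ) * d - t = (d - 1) * t by ring, norm_mul, Complex.norm_real,
              Real.norm_of_nonneg ht.le]
            ring
          · refine (norm_mul_le _ _).trans (mul_le_mul_of_nonneg_right ?_ (norm_nonneg _))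
            refine (hb z hz.1).trans (mul_le_mul_of_nonneg_left ?_ hM')
            have := hz.2
            simp only [Metric.mem_closedBall, dist_zero_right] at this
            exact Real.exp_le_exp.2 (mul_le_mul_of_nonneg_left this hw)
        refine squeeze_zero_norm' (a := fun t : ℝ => D * ‖d - 1‖ * t) ?_ ?_
        · filter_upwards [Ioc_mem_nhdsGT (zero_lt_one (α := ℝ))] with t ht
          exact hbound t ht.1 ht.2
        · have : Tendsto (fun t : ℝ => D * ‖d - 1‖ * t) (𝓝 0) (𝓝 (D * ‖d - 1‖ * 0)) :=
            (continuous_const.mul continuous_id).tendsto 0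
          rw [mul_zero] at this
          exact this.mono_left nhdsWithin_le_nhds
      have h1 := hclose.add hlim
      simp only [sub_add_cancel, zero_add] at h1
      have h2 : Tendsto (fun t : ℝ => Complex.exp (-(l * d) * t)) (𝓝[>] 0) (𝓝 1) := by
        have : Continuous (fun t : ℝ => Complex.exp (-(l * d) * t)) := by fun_prop
        have := this.tendsto 0
        simp only [Complex.ofReal_zero, mul_zero, Complex.exp_zero] at this
        exact this.mono_left nhdsWithin_le_nhds
      simpa using h2.smul h1
    · refine squeeze_zero_norm' (a := fun t : ℝ =>
        M' * ‖R‖ * Real.exp (-(((l * d).re - w * ‖d‖) * t))) ?_ ?_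
      · filter_upwards [eventually_gt_atTop 0] with t ht
        rw [norm_smul, norm_cexp_mul_real]
        have h1 : ‖S ((t : ℂ) * d) * R‖ ≤ M' * Real.exp (w * ‖d‖ * t) * ‖R‖ :=
          (norm_mul_le _ _).trans (mul_le_mul_of_nonneg_right (hb2 t ht) (norm_nonneg _))
        refine (mul_le_mul_of_nonneg_left h1 (Real.exp_pos _).le).trans_eq ?_
        rw [show -(((l * d).re - w * ‖d‖) * t) = (-(l * d)).re * t + w * ‖d‖ * t by
          rw [Complex.neg_re]; ring, Real.exp_add]
        ring
      · have h1 : Tendsto (fun t : ℝ => ((l * d).re - w * ‖d‖) * t) atTop atTop :=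
          tendsto_id.const_mul_atTop (by linarith)
        have := (Real.tendsto_exp_neg_atTop_nhds_zero.comp h1).const_mul (M' * ‖R‖)
        simpa using this
  have hfin : d • Q₀ = R + (m - l) • (d • Q₀ * R) := by
    have e : Q₀ * (d • ((m - l) • R - 1)) = (m - l) • (d • Q₀ * R) - d • Q₀ := by
      simp only [mul_smul_comm, smul_mul_assoc, mul_sub, mul_one, smul_sub]
      rw [smul_comm]
    rw [e] at hintg
    rw [sub_eq_iff_eq_add] at hintg
    rw [hintg]; abel
  refine ⟨d • Q₀, ?_, hfin, ?_⟩
  · rw [show R * (d • Q₀) = d • Q₀ * R by rw [mul_smul_comm, smul_mul_assoc, hQR]]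
    exact hfin
  · rw [norm_smul, norm_smul]
    calc ‖l‖ * (‖d‖ * ‖Q₀‖) ≤ ‖l‖ * ((1 + b) * (2 * M' / (c₀ * ‖l‖))) := by gcongr
      _ = (1 + b) * (2 * M' / c₀) := by field_simp

end Forward

section ForwardMain

lemma forward_main {A : X →ₗ.[ℂ] X} {T : ℝ → X →L[ℂ] X} (hT : Generates A T)
    {S : ℂ → X →L[ℂ] X} {a : ℝ} (ha : 0 < a) (hS : DifferentiableOn ℂ S (HCone a))
    (hST : ∀ t : ℝ, 0 < t → S t = T t) {M' w : ℝ} (hw : 0 ≤ w)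
    (hb : ∀ z ∈ HCone a, ‖S z‖ ≤ M' * Real.exp (w * ‖z‖)) :
    ∃ c : ℝ, 0 < c ∧ ∃ C : ℝ, ∀ l : ℂ, 0 < l.re → 2 * w < c * ‖l‖ →
      ∃ Q : X →L[ℂ] X, IsResolventOf A l Q ∧ ‖l • Q‖ ≤ C := by
  obtain ⟨M, ω, ⟨-, hsg, ⟨-, hbd⟩, -⟩, hgen⟩ := hT
  obtain ⟨R, hRes, hRint⟩ := hgen (ω + 1) (by linarith)
  have hm : ω < ((ω + 1 : ℝ) : ℂ).re := by simp
  have hcT : ContinuousOn T (Ioi 0) := by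
    have : ContinuousOn (fun t : ℝ => S t) (Ioi 0) :=
      hS.continuousOn.comp (by fun_prop) (fun t ht => HCone.ofReal ha ht)
    exact this.congr fun t ht => (hST t ht).symm
  have hi := integrableOn_exp_smul hm hcT hbd
  have hR : R = ∫ t in Ioi (0 : ℝ), Complex.exp (-((ω + 1 : ℝ) : ℂ) * t) • T t := by
    ext x
    rw [hRint x, ContinuousLinearMap.integral_apply hi x]
    refine setIntegral_congr_fun measurableSet_Ioi fun t ht => ?_
    change Real.exp (-(ω + 1) * t) • T t x = Complex.exp (-((ω + 1 : ℝ) : ℂ) * t) • T t x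
    rw [← Complex.coe_smul, Complex.ofReal_exp]
    push_cast; rfl
  obtain ⟨c, hc, C, h⟩ := forward_core hm hbd hsg hR ha hS hST hw hb
  refine ⟨c, hc, C, fun l hl hlw => ?_⟩
  obtain ⟨Q, h1, h2, h3⟩ := h l hl hlw
  exact ⟨Q, hRes.of_identity h1 h2, h3⟩

/-- Exponential bound from boundedness near `0`. -/
lemma exists_exp_bound {E : Type*} [NormedRing E] [NormedAlgebra ℂ E] [CompleteSpace E]
    {T : ℝ → E} (hs : ∀ s t, 0 < s → 0 < t → T (s + t) = T s * T t)
    {S : ℂ → E} {a : ℝ} (ha : 0 < a) (hS : DifferentiableOn ℂ S (HCone a))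
    (hST : ∀ t : ℝ, 0 < t → S t = T t) {C : ℝ} (hC : ∀ z ∈ HCone a, ‖z‖ ≤ 1 → ‖S z‖ ≤ C) :
    ∃ M' w : ℝ, 0 ≤ w ∧ ∀ z ∈ HCone a, ‖S z‖ ≤ M' * Real.exp (w * ‖z‖) := by
  have hshift : ∀ w ∈ HCone a, DifferentiableOn ℂ (fun z => S (w + z)) (HCone a) := by
    intro w hw
    exact hS.comp (by fun_prop) (fun z hz => HCone.add hw hz)
  have h1 : ∀ s : ℝ, 0 < s → ∀ z ∈ HCone a, S (s + z) = S s * S z := by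
    intro s hs0
    refine HCone.eqOn ha (hshift s (HCone.ofReal ha hs0)) (hS.const_mul _) fun t ht => ?_
    rw [hST s hs0, hST t ht, ← hs s t hs0 ht, ← hST (s + t) (by linarith)]
    push_cast; rfl
  have h2 : ∀ w ∈ HCone a, ∀ z ∈ HCone a, S (w + z) = S z * S w := by
    intro w hw
    refine HCone.eqOn ha (hshift w hw) (hS.mul_const _) fun t ht => ?_
    rw [add_comm, h1 t ht w hw]
  have hpow : ∀ n : ℕ, ∀ z ∈ HCone a, S (((n + 1 : ℕ) : ℂ) * z) = S z ^ (n + 1) := by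
    intro n z hz
    induction n with
    | zero => simp
    | succ n ih =>
      have hmem : ((n + 1 : ℕ) : ℂ) * z ∈ HCone a := by
        have := HCone.smul (t := ((n + 1 : ℕ) : ℝ)) (by positivity) hz
        simpa using this
      rw [pow_succ', ← ih, ← h2 _ hmem z hz]
      congr 1; push_cast; ring
  set C' := max C 1 with hC'
  have hC1 : 1 ≤ C' := le_max_right _ _
  refine ⟨C' ^ 2, Real.log C', Real.log_nonneg hC1, fun z hz => ?_⟩
  obtain ⟨n, hn⟩ : ∃ n : ℕ, n = ⌈‖z‖⌉₊ := ⟨_, rfl⟩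
  have hn1 : ‖z‖ ≤ n := hn ▸ Nat.le_ceil _
  have hn2 : (n : ℝ) < ‖z‖ + 1 := hn ▸ Nat.ceil_lt_add_one (norm_nonneg _)
  have hnpos : (0 : ℝ) < ((n + 1 : ℕ) : ℝ) := by positivity
  have hz' : (((n + 1 : ℕ) : ℝ)⁻¹ : ℝ) * z ∈ HCone a := HCone.smul (by positivity) hz
  have e : S z = S ((((n + 1 : ℕ) : ℝ)⁻¹ : ℝ) * z) ^ (n + 1) := by
    rw [← hpow n _ hz', ← mul_assoc]
    have : ((n + 1 : ℕ) : ℂ) * ((((n + 1 : ℕ) : ℝ)⁻¹ : ℝ) : ℂ) = 1 := by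
      rw [Complex.ofReal_inv, Complex.ofReal_natCast]
      exact mul_inv_cancel₀ (by exact_mod_cast (Nat.succ_ne_zero n))
    rw [this, one_mul]
  have hnorm : ‖S ((((n + 1 : ℕ) : ℝ)⁻¹ : ℝ) * z)‖ ≤ C' := by
    refine (hC _ hz' ?_).trans (le_max_left _ _)
    rw [norm_mul, Complex.norm_real, Real.norm_of_nonneg (by positivity), inv_mul_le_iff₀ hnpos]
    push_cast; linarith
  have hexp : Real.exp (Real.log C' * ‖z‖) = C' ^ ‖z‖ := by
    rw [Real.rpow_def_of_pos (by linarith)]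
  calc ‖S z‖ ≤ ‖S ((((n + 1 : ℕ) : ℝ)⁻¹ : ℝ) * z)‖ ^ (n + 1) := by
        conv_lhs => rw [e]
        exact norm_pow_le' _ (Nat.succ_pos n)
    _ ≤ C' ^ (n + 1) := by gcongr
    _ = C' ^ ((n + 1 : ℕ) : ℝ) := (Real.rpow_natCast _ _).symm
    _ ≤ C' ^ (2 + ‖z‖) := by
        apply Real.rpow_le_rpow_of_exponent_le hC1
        push_cast; linarith
    _ = C' ^ 2 * Real.exp (Real.log C' * ‖z‖) := by
        rw [hexp, Real.rpow_add (by linarith), Real.rpow_two]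

lemma forward_one {A : X →ₗ.[ℂ] X} {T : ℝ → X →L[ℂ] X} (hT : Generates A T)
    (hh : IsHolomorphicSG T) : ∃ ω : ℝ, ∃ C : ℝ, ∀ l : ℂ, ω < l.re →
        ∃ R : X →L[ℂ] X, IsResolventOf A l R ∧ ‖l • R‖ ≤ C := by
  obtain ⟨θ, h0, h1, S, hS, hST, C, hC⟩ := hh
  obtain ⟨a, ha, hsub⟩ := exists_HCone_subset_Sector h0 h1
  have hsg := hT
  obtain ⟨-, -, ⟨-, hsg, -, -⟩, -⟩ := hsg
  obtain ⟨M', w, hw, hb⟩ := exists_exp_bound hsg ha (hS.mono hsub) hST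
    (fun z hz hz1 => hC z (hsub hz) hz1)
  obtain ⟨c, hc, C', h⟩ := forward_main hT ha (hS.mono hsub) hST hw hb
  refine ⟨2 * w / c, C', fun l hl => h l ?_ ?_⟩
  · exact lt_of_le_of_lt (by positivity) hl
  · have := Complex.re_le_norm l
    rw [div_lt_iff₀ hc] at hl
    nlinarith

lemma forward_two {A : X →ₗ.[ℂ] X} {T : ℝ → X →L[ℂ] X} (hT : Generates A T)
    (hh : IsBoundedHolomorphicSG T) : ∃ C : ℝ, ∀ l : ℂ, 0 < l.re →
        ∃ R : X →L[ℂ] X, IsResolventOf A l R ∧ ‖l • R‖ ≤ C := by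
  obtain ⟨θ, h0, h1, S, hS, hST, C, hC⟩ := hh
  obtain ⟨a, ha, hsub⟩ := exists_HCone_subset_Sector h0 h1
  obtain ⟨c, hc, C', h⟩ := forward_main hT ha (hS.mono hsub) hST (M' := C) le_rfl
    (fun z hz => by simpa using hC z (hsub hz))
  refine ⟨C', fun l hl => h l hl ?_⟩
  have := Complex.re_le_norm l
  have : 0 < ‖l‖ := by linarith
  simp only [mul_zero]; positivity

end ForwardMain

section Kappa

open scoped FourierTransform

lemma integrableOn_mul_cexp {c : ℂ} (hc : c.re = 1) :
    IntegrableOn (fun x : ℝ => (x : ℂ) * Complex.exp (-c * x)) (Ioi 0) := by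
  have h := Real.GammaIntegral_convergent (s := 2) (by norm_num)
  refine Integrable.mono' h ?_ ?_
  · exact (Continuous.aestronglyMeasurable (by fun_prop))
  · refine (ae_restrict_mem measurableSet_Ioi).mono fun x hx => ?_
    have hx' : 0 < x := hx
    rw [norm_mul, norm_cexp_mul_real, Complex.norm_real, Real.norm_of_nonneg hx'.le,
      Complex.neg_re, hc]
    norm_num
    rw [mul_comm]

lemma integral_mul_cexp {c : ℂ} (hc : c.re = 1) :
    ∫ x in Ioi (0 : ℝ), (x : ℂ) * Complex.exp (-c * x) = (c ^ 2)⁻¹ := by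
  have hc0 : c ≠ 0 := by rintro rfl; simp at hc
  have := integral_Ioi_deriv (F := fun x : ℝ => -((x : ℂ) * c⁻¹ + (c ^ 2)⁻¹) * Complex.exp (-c * x))
    (F' := fun x : ℝ => (x : ℂ) * Complex.exp (-c * x)) (L := -(c ^ 2)⁻¹) ?_
    (integrableOn_mul_cexp hc) ?_ ?_
  · simpa using this
  · intro t _
    have h1 : HasDerivAt (fun x : ℝ => -((x : ℂ) * c⁻¹ + (c ^ 2)⁻¹)) (-c⁻¹) t := by
      have := (((Complex.ofRealCLM.hasDerivAt (x := t)).mul_const c⁻¹).add_const (c ^ 2)⁻¹).neg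
      exact this.congr_deriv (by simp)
    refine (h1.mul (hasDerivAt_cexp_mul (-c) t)).congr_deriv ?_
    field_simp
    ring
  · have hcont : Continuous
        (fun x : ℝ => -((x : ℂ) * c⁻¹ + (c ^ 2)⁻¹) * Complex.exp (-c * x)) := by fun_prop
    have := hcont.tendsto 0
    simp only [Complex.ofReal_zero, zero_mul, zero_add, mul_zero, Complex.exp_zero, mul_one] at this
    exact this.mono_left nhdsWithin_le_nhds
  · have e1 := (Real.tendsto_pow_mul_exp_neg_atTop_nhds_zero 1).mul_const ‖c⁻¹‖
    have e2 := (Real.tendsto_pow_mul_exp_neg_atTop_nhds_zero 0).mul_const ‖(c ^ 2)⁻¹‖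
    have e3 := e1.add e2
    simp only [zero_mul, add_zero] at e3
    refine squeeze_zero_norm' ?_ e3
    filter_upwards [eventually_gt_atTop 0] with t ht
    rw [norm_mul, norm_neg, norm_cexp_mul_real, Complex.neg_re, hc]
    have h1 : ‖(t : ℂ) * c⁻¹ + (c ^ 2)⁻¹‖ ≤ t * ‖c⁻¹‖ + ‖(c ^ 2)⁻¹‖ := by
      refine (norm_add_le _ _).trans_eq ?_
      rw [norm_mul, Complex.norm_real, Real.norm_of_nonneg ht.le]
    refine (mul_le_mul_of_nonneg_right h1 (Real.exp_pos _).le).trans_eq ?_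
    simp only [pow_one, pow_zero, neg_mul, one_mul]
    ring

/-- The vertical line `Re = 1`. -/
noncomputable def vline (y : ℝ) : ℂ := 1 + y * Complex.I

lemma vline_re (y : ℝ) : (vline y).re = 1 := by simp [vline]

lemma vline_norm_sq (y : ℝ) : ‖vline y‖ ^ 2 = 1 + y ^ 2 := by
  rw [← Complex.normSq_eq_norm_sq, Complex.normSq_apply]; simp [vline]; ring

lemma vline_ne_zero (y : ℝ) : vline y ≠ 0 := by
  intro h; have := vline_re y; rw [h] at this; simp at this

lemma one_le_norm_vline (y : ℝ) : 1 ≤ ‖vline y‖ := by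
  have := Complex.re_le_norm (vline y); rwa [vline_re] at this

lemma continuous_vline : Continuous vline := by unfold vline; fun_prop

lemma norm_exp_vline (y : ℝ) : ‖Complex.exp (vline y)‖ = Real.exp 1 := by
  rw [Complex.norm_exp, vline_re]

lemma integrable_vline_inv : Integrable (fun y : ℝ => ((vline y) ^ 2)⁻¹) := by
  refine Integrable.mono' integrable_inv_one_add_sq ?_ (Eventually.of_forall fun y => ?_)
  · refine Continuous.aestronglyMeasurable ?_
    exact (continuous_vline.pow 2).inv₀ fun y => pow_ne_zero 2 (vline_ne_zero y)
  · rw [norm_inv, norm_pow, vline_norm_sq]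

lemma kappa : ∫ y : ℝ, Complex.exp (vline y) * ((vline y) ^ 2)⁻¹ = 2 * Real.pi := by
  set f : ℝ → ℂ := indicator (Ioi 0) (fun x : ℝ => (x : ℂ) * Complex.exp (-1 * x)) with hf
  have hfi : Integrable f :=
    (integrable_indicator_iff measurableSet_Ioi).2 (integrableOn_mul_cexp (by simp))
  have hF : ∀ ξ : ℝ, 𝓕 f ξ = ((vline (2 * Real.pi * ξ)) ^ 2)⁻¹ := by
    intro ξ
    rw [Real.fourier_eq', ← integral_mul_cexp (vline_re _),
      ← integral_indicator measurableSet_Ioi]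
    congr 1; ext x
    by_cases hx : x ∈ Ioi (0 : ℝ)
    · simp only [hf]
      rw [indicator_of_mem hx, indicator_of_mem hx, smul_eq_mul, mul_left_comm, ← Complex.exp_add]
      congr 2
      simp [vline]; ring
    · simp only [hf]
      rw [indicator_of_notMem hx, indicator_of_notMem hx, smul_zero]
  have hFi : Integrable (𝓕 f) := by
    have : 𝓕 f = fun ξ => ((vline (2 * Real.pi * ξ)) ^ 2)⁻¹ := funext hF
    rw [this]
    exact integrable_vline_inv.comp_mul_left' (by positivity)
  have hfc : ContinuousAt f 1 := by
    have : ContinuousAt (fun x : ℝ => (x : ℂ) * Complex.exp (-1 * x)) 1 := by fun_prop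
    refine this.congr ?_
    filter_upwards [isOpen_Ioi.mem_nhds (show (0 : ℝ) < 1 by norm_num)] with x hx
    simp only [hf]; rw [indicator_of_mem hx]
  have hinv := hfi.fourierInv_fourier_eq hFi hfc
  have h1 : f 1 = Complex.exp (-1) := by
    simp only [hf]; rw [indicator_of_mem (by simp)]; simp
  rw [Real.fourierInv_eq', h1] at hinv
  have h2 : ∀ ξ : ℝ, Complex.exp (↑(2 * Real.pi * inner ℝ ξ 1) * Complex.I) • 𝓕 f ξ =
      Complex.exp (-1) * (fun y : ℝ => Complex.exp (vline y) * ((vline y) ^ 2)⁻¹)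
        (2 * Real.pi * ξ) := by
    intro ξ
    simp only
    rw [hF, smul_eq_mul, ← mul_assoc, ← Complex.exp_add]
    congr 2
    simp [vline]
  simp_rw [h2] at hinv
  rw [integral_const_mul, Measure.integral_comp_mul_left
    (fun y : ℝ => Complex.exp (vline y) * ((vline y) ^ 2)⁻¹) (2 * Real.pi)] at hinv
  have h3 := mul_left_cancel₀ (Complex.exp_ne_zero (-1)) (hinv.trans (mul_one _).symm)
  rw [abs_of_pos (by positivity), ← Complex.coe_smul, smul_eq_mul, Complex.ofReal_inv,
    inv_mul_eq_iff_eq_mul₀ (by exact_mod_cast (by positivity : 2 * Real.pi ≠ 0))] at h3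
  rw [h3]; push_cast; ring

end Kappa

section Backward

variable {E : Type*} [NormedRing E] [NormedAlgebra ℂ E] [CompleteSpace E]

lemma pseudo_continuousAt {Rf : ℂ → E} {U : Set ℂ} {K : ℝ} (hU : IsOpen U) (h0 : (0 : ℂ) ∉ U)
    (hid : ∀ ν ∈ U, ∀ μ ∈ U, Rf ν - Rf μ = (μ - ν) • (Rf ν * Rf μ))
    (hK : ∀ ν ∈ U, ‖ν‖ * ‖Rf ν‖ ≤ K) {ν : ℂ} (hν : ν ∈ U) : ContinuousAt Rf ν := by
  have hν0 : 0 < ‖ν‖ := by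
    rw [norm_pos_iff]; rintro rfl; exact h0 hν
  have hev : ∀ᶠ μ in 𝓝 ν, ‖ν‖ / 2 < ‖μ‖ :=
    (continuous_norm.tendsto ν).eventually (lt_mem_nhds (by linarith))
  rw [ContinuousAt, tendsto_iff_norm_sub_tendsto_zero]
  have hlim : Tendsto (fun μ => ‖ν - μ‖ * (K / (‖ν‖ / 2) * ‖Rf ν‖)) (𝓝 ν) (𝓝 0) := by
    have : Continuous (fun μ => ‖ν - μ‖ * (K / (‖ν‖ / 2) * ‖Rf ν‖)) := by fun_prop
    simpa using this.tendsto ν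
  refine squeeze_zero' (Eventually.of_forall fun _ => norm_nonneg _) ?_ hlim
  filter_upwards [hev, hU.mem_nhds hν] with μ hμ hμU
  rw [hid μ hμU ν hν, norm_smul]
  refine mul_le_mul_of_nonneg_left ((norm_mul_le _ _).trans ?_) (norm_nonneg _)
  refine mul_le_mul_of_nonneg_right ?_ (norm_nonneg _)
  rw [le_div_iff₀ (by positivity)]
  have := hK μ hμU
  nlinarith [norm_nonneg (Rf μ)]

lemma pseudo_hasDerivAt {Rf : ℂ → E} {U : Set ℂ} {K : ℝ} (hU : IsOpen U) (h0 : (0 : ℂ) ∉ U)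
    (hid : ∀ ν ∈ U, ∀ μ ∈ U, Rf ν - Rf μ = (μ - ν) • (Rf ν * Rf μ))
    (hK : ∀ ν ∈ U, ‖ν‖ * ‖Rf ν‖ ≤ K) {ν : ℂ} (hν : ν ∈ U) :
    HasDerivAt Rf (-(Rf ν * Rf ν)) ν := by
  have hc := pseudo_continuousAt hU h0 hid hK hν
  rw [hasDerivAt_iff_tendsto_slope]
  have h1 : Tendsto (fun μ => -(Rf μ * Rf ν)) (𝓝[≠] ν) (𝓝 (-(Rf ν * Rf ν))) :=
    ((hc.tendsto.mul_const (Rf ν)).neg).mono_left nhdsWithin_le_nhds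
  refine h1.congr' ?_
  filter_upwards [self_mem_nhdsWithin, nhdsWithin_le_nhds (hU.mem_nhds hν)] with μ hμ hμU
  have hne : μ - ν ≠ 0 := sub_ne_zero.2 hμ
  rw [slope_def_module, hid μ hμU ν hν, smul_smul, ← neg_sub μ ν, mul_neg, inv_mul_cancel₀ hne,
    neg_one_smul]

/-- The scaled resolvent `(λ - zA)⁻¹` with `λ = 1 + iy`. -/
noncomputable def scaledRes (Rf : ℂ → E) (z : ℂ) (y : ℝ) : E := z⁻¹ • Rf (vline y / z)

/-- The semigroup, as an integral over the line `Re λ = 1`. -/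
noncomputable def sgIntegral (Rf : ℂ → E) (z : ℂ) : E :=
  ((2 * Real.pi : ℝ) : ℂ)⁻¹ • ∫ y : ℝ, Complex.exp (vline y) • scaledRes Rf z y ^ 2

lemma scaledRes_norm_le {Rf : ℂ → E} {U : Set ℂ} {K : ℝ}
    (hK : ∀ ν ∈ U, ‖ν‖ * ‖Rf ν‖ ≤ K) {z : ℂ} (hz : z ≠ 0) {y : ℝ} (hU : vline y / z ∈ U) :
    ‖scaledRes Rf z y‖ ≤ K / ‖vline y‖ := by
  have h := hK _ hU
  have h1 := one_le_norm_vline y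
  rw [le_div_iff₀ (by linarith), scaledRes, norm_smul, norm_inv]
  rw [norm_div] at h
  refine le_trans (le_of_eq ?_) h
  field_simp

lemma scaledRes_hasDerivAt_z {Rf : ℂ → E} {y : ℝ} {z : ℂ} (hz : z ≠ 0)
    (hd : HasDerivAt Rf (-(Rf (vline y / z) * Rf (vline y / z))) (vline y / z)) :
    HasDerivAt (fun z => scaledRes Rf z y)
      (z⁻¹ • (vline y • scaledRes Rf z y ^ 2 - scaledRes Rf z y)) z := by
  have h1 : HasDerivAt (fun z : ℂ => vline y / z) (-(vline y) / z ^ 2) z := by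
    have := (hasDerivAt_inv hz).const_mul (vline y)
    simp only [div_eq_mul_inv]
    exact this.congr_deriv (by ring)
  have h2 : HasDerivAt (fun z : ℂ => Rf (vline y / z)) _ z := HasDerivAt.scomp z hd h1
  have h3 := (hasDerivAt_inv hz).smul h2
  refine h3.congr_deriv ?_
  simp only [scaledRes, smul_sub, pow_two, smul_mul_smul_comm, smul_smul, smul_neg]
  rw [← neg_smul]
  have e1 : -(z⁻¹ * (-vline y / (z * z))) = z⁻¹ * (vline y * (z⁻¹ * z⁻¹)) := by
    field_simp
  have e2 : -(z * z)⁻¹ = -(z⁻¹ * z⁻¹) := by rw [mul_inv]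
  rw [e1, e2, neg_smul, sub_eq_add_neg]

lemma scaledRes_hasDerivAt_y {Rf : ℂ → E} {y : ℝ} {z : ℂ} (hz : z ≠ 0)
    (hd : HasDerivAt Rf (-(Rf (vline y / z) * Rf (vline y / z))) (vline y / z)) :
    HasDerivAt (fun y => scaledRes Rf z y) (-(Complex.I • scaledRes Rf z y ^ 2)) y := by
  have h1 : HasDerivAt (fun y : ℝ => vline y / z) (Complex.I / z) y := by
    have := (((Complex.ofRealCLM.hasDerivAt (x := y)).mul_const Complex.I).const_add 1).div_const z
    exact this.congr_deriv (by simp)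
  have h2 : HasDerivAt (fun y : ℝ => Rf (vline y / z)) _ y := HasDerivAt.scomp y hd h1
  refine (h2.const_smul z⁻¹).congr_deriv ?_
  simp only [scaledRes, pow_two, smul_mul_smul_comm, smul_smul, smul_neg]
  congr 2
  field_simp

lemma integrable_of_scaled {g : ℝ → E} {D : ℝ} (hg : Continuous g)
    (h : ∀ y, ‖g y‖ ≤ D / ‖vline y‖ ^ 2) : Integrable g := by
  refine Integrable.mono' (integrable_inv_one_add_sq.const_mul D) hg.aestronglyMeasurable
    (Eventually.of_forall fun y => ?_)
  rw [← vline_norm_sq, ← div_eq_mul_inv]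
  exact h y

lemma norm_integral_of_scaled {g : ℝ → E} {D : ℝ}
    (h : ∀ y, ‖g y‖ ≤ D / ‖vline y‖ ^ 2) : ‖∫ y, g y‖ ≤ D * Real.pi := by
  rw [← integral_univ_inv_one_add_sq, ← integral_const_mul]
  refine norm_integral_le_of_norm_le (integrable_inv_one_add_sq.const_mul D)
    (Eventually.of_forall fun y => ?_)
  rw [← vline_norm_sq, ← div_eq_mul_inv]
  exact h y

end Backward

section BackwardCore

variable {E : Type*} [NormedRing E] [NormedAlgebra ℂ E] [CompleteSpace E]

/-- Standing assumptions: a pseudo-resolvent on `U` with scale invariant bound. -/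
structure PseudoRes (Rf : ℂ → E) (U : Set ℂ) (K a : ℝ) : Prop where
  ha : 0 < a
  hU : IsOpen U
  h0 : (0 : ℂ) ∉ U
  hid : ∀ ν ∈ U, ∀ μ ∈ U, Rf ν - Rf μ = (μ - ν) • (Rf ν * Rf μ)
  hK : ∀ ν ∈ U, ‖ν‖ * ‖Rf ν‖ ≤ K
  hcone : ∀ z ∈ HCone a, ∀ y : ℝ, vline y / z ∈ U

namespace PseudoRes

variable {Rf : ℂ → E} {U : Set ℂ} {K a : ℝ}

lemma K_nonneg (H : PseudoRes Rf U K a) : 0 ≤ K :=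
  le_trans (by positivity) (H.hK _ (H.hcone _ (HCone.ofReal H.ha one_pos) 0))

lemma deriv_z (H : PseudoRes Rf U K a) {z : ℂ} (hz : z ∈ HCone a) (y : ℝ) :
    HasDerivAt (fun z => scaledRes Rf z y)
      (z⁻¹ • (vline y • scaledRes Rf z y ^ 2 - scaledRes Rf z y)) z :=
  scaledRes_hasDerivAt_z (HCone.ne_zero H.ha hz)
    (pseudo_hasDerivAt H.hU H.h0 H.hid H.hK (H.hcone z hz y))

lemma deriv_y (H : PseudoRes Rf U K a) {z : ℂ} (hz : z ∈ HCone a) (y : ℝ) :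
    HasDerivAt (fun y => scaledRes Rf z y) (-(Complex.I • scaledRes Rf z y ^ 2)) y :=
  scaledRes_hasDerivAt_y (HCone.ne_zero H.ha hz)
    (pseudo_hasDerivAt H.hU H.h0 H.hid H.hK (H.hcone z hz y))

lemma cont_y (H : PseudoRes Rf U K a) {z : ℂ} (hz : z ∈ HCone a) :
    Continuous (fun y => scaledRes Rf z y) :=
  continuous_iff_continuousAt.2 fun y => (H.deriv_y hz y).continuousAt

lemma bound (H : PseudoRes Rf U K a) {z : ℂ} (hz : z ∈ HCone a) (y : ℝ) :
    ‖scaledRes Rf z y‖ ≤ K / ‖vline y‖ :=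
  scaledRes_norm_le H.hK (HCone.ne_zero H.ha hz) (H.hcone z hz y)

lemma bound' (H : PseudoRes Rf U K a) {z : ℂ} (hz : z ∈ HCone a) (y : ℝ) :
    ‖scaledRes Rf z y‖ ≤ K :=
  (H.bound hz y).trans (div_le_self H.K_nonneg (one_le_norm_vline y))

lemma bound_sq (H : PseudoRes Rf U K a) {z : ℂ} (hz : z ∈ HCone a) (y : ℝ) :
    ‖scaledRes Rf z y ^ 2‖ ≤ K ^ 2 / ‖vline y‖ ^ 2 := by
  rw [pow_two]
  refine (norm_mul_le _ _).trans ?_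
  have h := H.bound hz y
  calc _ ≤ (K / ‖vline y‖) * (K / ‖vline y‖) := by
        have := norm_nonneg (scaledRes Rf z y)
        gcongr
        exact this.trans h
    _ = _ := by ring

lemma bound_cube (H : PseudoRes Rf U K a) {z : ℂ} (hz : z ∈ HCone a) (y : ℝ) :
    ‖scaledRes Rf z y ^ 3‖ ≤ K ^ 3 / ‖vline y‖ ^ 3 := by
  rw [pow_succ]
  refine (norm_mul_le _ _).trans ?_
  have h := H.bound hz y
  have h2 := H.bound_sq hz y
  calc _ ≤ (K ^ 2 / ‖vline y‖ ^ 2) * (K / ‖vline y‖) := by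
        have := norm_nonneg (scaledRes Rf z y ^ 2)
        gcongr
    _ = _ := by ring

lemma bound_cube' (H : PseudoRes Rf U K a) {z : ℂ} (hz : z ∈ HCone a) (y : ℝ) :
    ‖scaledRes Rf z y ^ 3‖ ≤ K ^ 3 / ‖vline y‖ ^ 2 := by
  refine (H.bound_cube hz y).trans ?_
  have h1 := one_le_norm_vline y
  have := H.K_nonneg
  gcongr
  norm_num

lemma bound_mul_cube (H : PseudoRes Rf U K a) {z : ℂ} (hz : z ∈ HCone a) (y : ℝ) :
    ‖vline y • scaledRes Rf z y ^ 3‖ ≤ K ^ 3 / ‖vline y‖ ^ 2 := by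
  rw [norm_smul]
  have h1 := one_le_norm_vline y
  refine (mul_le_mul_of_nonneg_left (H.bound_cube hz y) (norm_nonneg _)).trans_eq ?_
  have : ‖vline y‖ ≠ 0 := by linarith
  field_simp

lemma int_sq (H : PseudoRes Rf U K a) {z : ℂ} (hz : z ∈ HCone a) :
    Integrable fun y : ℝ => Complex.exp (vline y) • scaledRes Rf z y ^ 2 := by
  refine integrable_of_scaled (D := Real.exp 1 * K ^ 2) ?_ fun y => ?_
  · exact (Complex.continuous_exp.comp continuous_vline).smul ((H.cont_y hz).pow 2)
  · rw [norm_smul, norm_exp_vline, mul_div_assoc]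
    exact mul_le_mul_of_nonneg_left (H.bound_sq hz y) (Real.exp_pos _).le

lemma int_cube (H : PseudoRes Rf U K a) {z : ℂ} (hz : z ∈ HCone a) :
    Integrable fun y : ℝ => Complex.exp (vline y) • scaledRes Rf z y ^ 3 := by
  refine integrable_of_scaled (D := Real.exp 1 * K ^ 3) ?_ fun y => ?_
  · exact (Complex.continuous_exp.comp continuous_vline).smul ((H.cont_y hz).pow 3)
  · rw [norm_smul, norm_exp_vline, mul_div_assoc]
    exact mul_le_mul_of_nonneg_left (H.bound_cube' hz y) (Real.exp_pos _).le

lemma norm_sg_le (H : PseudoRes Rf U K a) {z : ℂ} (hz : z ∈ HCone a) :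
    ‖sgIntegral Rf z‖ ≤ Real.exp 1 * K ^ 2 / 2 := by
  have h : ‖∫ y : ℝ, Complex.exp (vline y) • scaledRes Rf z y ^ 2‖ ≤
      (Real.exp 1 * K ^ 2) * Real.pi := by
    refine norm_integral_of_scaled fun y => ?_
    rw [norm_smul, norm_exp_vline, mul_div_assoc]
    exact mul_le_mul_of_nonneg_left (H.bound_sq hz y) (Real.exp_pos _).le
  have hp := Real.pi_pos
  rw [sgIntegral, norm_smul, norm_inv, Complex.norm_real, Real.norm_of_nonneg (by positivity)]
  refine (mul_le_mul_of_nonneg_left h (by positivity)).trans_eq ?_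
  field_simp

lemma sg_hasDerivAt (H : PseudoRes Rf U K a) {z : ℂ} (hz : z ∈ HCone a) :
    (Integrable fun y : ℝ => Complex.exp (vline y) •
      ((2 * z⁻¹) • (vline y • scaledRes Rf z y ^ 3 - scaledRes Rf z y ^ 2))) ∧
    HasDerivAt (sgIntegral Rf) (((2 * Real.pi : ℝ) : ℂ)⁻¹ •
      ∫ y : ℝ, Complex.exp (vline y) •
        ((2 * z⁻¹) • (vline y • scaledRes Rf z y ^ 3 - scaledRes Rf z y ^ 2))) z := by
  have hz0 := HCone.ne_zero H.ha hz
  have hzn : 0 < ‖z‖ := norm_pos_iff.2 hz0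
  have hK := H.K_nonneg
  set D := Real.exp 1 * (2 * (2 / ‖z‖) * (K ^ 3 + K ^ 2)) with hD
  have hs : HCone a ∩ {w : ℂ | ‖z‖ / 2 < ‖w‖} ∈ 𝓝 z := by
    refine inter_mem ((isOpen_HCone a).mem_nhds hz) ?_
    exact (continuous_norm.tendsto z).eventually (lt_mem_nhds (by linarith))
  have hmeas : ∀ w ∈ HCone a, Continuous fun y : ℝ =>
      Complex.exp (vline y) • scaledRes Rf w y ^ 2 := fun w hw =>
    (Complex.continuous_exp.comp continuous_vline).smul ((H.cont_y hw).pow 2)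
  have key := hasDerivAt_integral_of_dominated_loc_of_deriv_le (μ := volume) (x₀ := z)
    (F := fun w y => Complex.exp (vline y) • scaledRes Rf w y ^ 2)
    (F' := fun w y => Complex.exp (vline y) •
      ((2 * w⁻¹) • (vline y • scaledRes Rf w y ^ 3 - scaledRes Rf w y ^ 2)))
    (bound := fun y => D * (1 + y ^ 2)⁻¹) hs ?_ (H.int_sq hz) ?_ ?_
    (integrable_inv_one_add_sq.const_mul D) ?_
  · have h2 := key.2.const_smul (((2 * Real.pi : ℝ) : ℂ)⁻¹)
    exact ⟨key.1, h2⟩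
  · filter_upwards [(isOpen_HCone a).mem_nhds hz] with w hw
    exact (hmeas w hw).aestronglyMeasurable
  · refine Continuous.aestronglyMeasurable ?_
    exact (Complex.continuous_exp.comp continuous_vline).smul
      (((continuous_vline.smul ((H.cont_y hz).pow 3)).sub ((H.cont_y hz).pow 2)).const_smul _)
  · refine Eventually.of_forall fun y w hw => ?_
    have hwn : ‖z‖ / 2 < ‖w‖ := hw.2
    have hwn0 : 0 < ‖w‖ := by linarith
    rw [norm_smul, norm_exp_vline, norm_smul, norm_mul, norm_inv, ← vline_norm_sq, hD,
      mul_assoc (Real.exp 1), mul_assoc (2 * (2 / ‖z‖))]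
    refine mul_le_mul_of_nonneg_left ?_ (Real.exp_pos _).le
    have h1 : ‖vline y • scaledRes Rf w y ^ 3 - scaledRes Rf w y ^ 2‖ ≤
        (K ^ 3 + K ^ 2) * (‖vline y‖ ^ 2)⁻¹ := by
      refine (norm_sub_le _ _).trans ?_
      have := H.bound_mul_cube hw.1 y
      have := H.bound_sq hw.1 y
      rw [add_mul, ← div_eq_mul_inv, ← div_eq_mul_inv]
      linarith
    have h2 : ‖w‖⁻¹ ≤ 2 / ‖z‖ := by
      rw [inv_le_comm₀ hwn0 (by positivity), inv_div]; exact hwn.le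
    have h3 : ‖(2 : ℂ)‖ = 2 := by simp
    rw [h3]
    refine mul_le_mul ?_ h1 (norm_nonneg _) (by positivity)
    linarith
  · refine Eventually.of_forall fun y w hw => ?_
    have h1 := H.deriv_z hw.1 y
    have h2 := (h1.mul h1).const_smul (Complex.exp (vline y))
    have h3 : (Complex.exp (vline y) • ((fun z => scaledRes Rf z y) * fun z => scaledRes Rf z y))
        = fun w => Complex.exp (vline y) • scaledRes Rf w y ^ 2 := by
      funext w; simp [pow_two]
    rw [h3] at h2
    refine h2.congr_deriv ?_
    congr 1
    set q := scaledRes Rf w y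
    have e3 : q ^ 2 * q = q ^ 3 := (pow_succ q 2).symm
    have e3' : q * q ^ 2 = q ^ 3 := (pow_succ' q 2).symm
    simp only [smul_mul_assoc, mul_smul_comm, sub_mul, mul_sub, e3, e3', ← pow_two]
    module

end PseudoRes

end BackwardCore

section BackwardCore2

variable {E : Type*} [NormedRing E] [NormedAlgebra ℂ E] [CompleteSpace E]

namespace PseudoRes

variable {Rf : ℂ → E} {U : Set ℂ} {K a : ℝ}

lemma comm (H : PseudoRes Rf U K a) {m n : ℂ} (hm : m ∈ U) (hn : n ∈ U) :
    Rf m * Rf n = Rf n * Rf m := by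
  by_cases h : n = m
  · rw [h]
  have h1 := H.hid m hm n hn
  have h2 := H.hid n hn m hm
  have h3 : (n - m) • (Rf m * Rf n) = (n - m) • (Rf n * Rf m) := by
    rw [← h1, ← neg_sub m n, neg_smul, ← h2, neg_sub]
  exact smul_right_injective E (sub_ne_zero.2 h) h3

lemma comm_scaled (H : PseudoRes Rf U K a) {m z : ℂ} (hm : m ∈ U) (hz : z ∈ HCone a) (y : ℝ) :
    Rf m * scaledRes Rf z y = scaledRes Rf z y * Rf m := by
  rw [scaledRes, mul_smul_comm, smul_mul_assoc, H.comm hm (H.hcone z hz y)]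

lemma comm_sg (H : PseudoRes Rf U K a) {m z : ℂ} (hm : m ∈ U) (hz : z ∈ HCone a) :
    Rf m * sgIntegral Rf z = sgIntegral Rf z * Rf m := by
  rw [sgIntegral, mul_smul_comm, smul_mul_assoc]
  congr 1
  rw [← integral_const_mul_of_integrable (H.int_sq hz),
    ← integral_mul_const_of_integrable (H.int_sq hz)]
  congr 1
  funext y
  have h := H.comm_scaled hm hz y
  rw [mul_smul_comm, smul_mul_assoc]
  congr 1
  exact (show Commute _ _ from h).pow_right 2

lemma rel (H : PseudoRes Rf U K a) {m z : ℂ} (hm : m ∈ U) (hz : z ∈ HCone a) (y : ℝ) :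
    vline y • (Rf m * scaledRes Rf z y) =
      Rf m + z • ((m • Rf m - 1) * scaledRes Rf z y) := by
  have hz0 := HCone.ne_zero H.ha hz
  have h := H.hid m hm _ (H.hcone z hz y)
  have hq : Rf (vline y / z) = z • scaledRes Rf z y := by
    rw [scaledRes, smul_smul, mul_inv_cancel₀ hz0, one_smul]
  rw [hq, mul_smul_comm, smul_smul, sub_mul, div_mul_cancel₀ _ hz0] at h
  rw [sub_mul, one_mul, smul_mul_assoc, smul_sub, smul_smul]
  rw [sub_smul] at h
  have h2 : vline y • (Rf m * scaledRes Rf z y) =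
    Rf m - z • scaledRes Rf z y + (m * z) • (Rf m * scaledRes Rf z y) := by rw [h]; abel
  rw [h2, mul_comm m z]; abel

lemma tendsto_zero_of_scaled {g : ℝ → E} {D : ℝ} {l : Filter ℝ}
    (hl : Tendsto (fun y : ℝ => (1 + y ^ 2)⁻¹) l (𝓝 0))
    (h : ∀ y, ‖g y‖ ≤ D / ‖vline y‖ ^ 2) : Tendsto g l (𝓝 0) := by
  refine squeeze_zero_norm h ?_
  have := hl.const_mul D
  simpa only [vline_norm_sq, div_eq_mul_inv, mul_zero] using this

lemma inv_one_add_sq_top : Tendsto (fun y : ℝ => (1 + y ^ 2)⁻¹) atTop (𝓝 0) :=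
  (tendsto_atTop_add_const_left _ _ (tendsto_pow_atTop two_ne_zero)).inv_tendsto_atTop

lemma inv_one_add_sq_bot : Tendsto (fun y : ℝ => (1 + y ^ 2)⁻¹) atBot (𝓝 0) := by
  have := inv_one_add_sq_top.comp tendsto_neg_atBot_atTop
  simpa [Function.comp_def] using this

lemma by_parts (H : PseudoRes Rf U K a) {z : ℂ} (hz : z ∈ HCone a) :
    ∫ y : ℝ, Complex.exp (vline y) • scaledRes Rf z y ^ 2 =
      (2 : ℂ) • ∫ y : ℝ, Complex.exp (vline y) • scaledRes Rf z y ^ 3 := by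
  have hd : ∀ y : ℝ, HasDerivAt (fun y : ℝ => Complex.exp (vline y) • scaledRes Rf z y ^ 2)
      (Complex.I • (Complex.exp (vline y) • scaledRes Rf z y ^ 2) -
        (2 * Complex.I) • (Complex.exp (vline y) • scaledRes Rf z y ^ 3)) y := by
    intro y
    have h1 : HasDerivAt vline Complex.I y := by
      have := (((Complex.ofRealCLM.hasDerivAt (x := y)).mul_const Complex.I).const_add 1)
      exact this.congr_deriv (by simp)
    have h2 := h1.cexp
    have h3 := H.deriv_y hz y
    have h4 := h2.smul (h3.mul h3)
    have h5 : ((fun y => Complex.exp (vline y)) •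
        ((fun y => scaledRes Rf z y) * fun y => scaledRes Rf z y))
        = fun w => Complex.exp (vline w) • scaledRes Rf z w ^ 2 := by
      funext w; simp [pow_two]
    rw [h5] at h4
    refine h4.congr_deriv ?_
    simp only [Pi.mul_apply]
    set q := scaledRes Rf z y
    have e3 : q ^ 2 * q = q ^ 3 := (pow_succ q 2).symm
    have e3' : q * q ^ 2 = q ^ 3 := (pow_succ' q 2).symm
    simp only [smul_mul_assoc, mul_smul_comm, neg_mul, mul_neg, e3, e3', ← pow_two]
    module
  have hb : ∀ y : ℝ, ‖Complex.exp (vline y) • scaledRes Rf z y ^ 2‖ ≤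
      (Real.exp 1 * K ^ 2) / ‖vline y‖ ^ 2 := by
    intro y
    rw [norm_smul, norm_exp_vline, mul_div_assoc]
    exact mul_le_mul_of_nonneg_left (H.bound_sq hz y) (Real.exp_pos _).le
  have i1 : Integrable fun y : ℝ =>
      Complex.I • (Complex.exp (vline y) • scaledRes Rf z y ^ 2) :=
    (H.int_sq hz).smul Complex.I
  have i2 : Integrable fun y : ℝ =>
      (2 * Complex.I) • (Complex.exp (vline y) • scaledRes Rf z y ^ 3) :=
    (H.int_cube hz).smul (2 * Complex.I)
  have key := integral_of_hasDerivAt_of_tendsto hd (i1.sub i2)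
    (tendsto_zero_of_scaled inv_one_add_sq_bot hb) (tendsto_zero_of_scaled inv_one_add_sq_top hb)
  rw [integral_sub i1 i2, integral_smul, integral_smul, sub_zero, sub_eq_zero,
    mul_comm (2 : ℂ), mul_smul] at key
  exact smul_right_injective E Complex.I_ne_zero key

lemma mul_sg_hasDerivAt (H : PseudoRes Rf U K a) {m z : ℂ} (hm : m ∈ U) (hz : z ∈ HCone a) :
    HasDerivAt (fun z => Rf m * sgIntegral Rf z) ((m • Rf m - 1) * sgIntegral Rf z) z := by
  obtain ⟨hi, hd⟩ := H.sg_hasDerivAt hz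
  refine (hd.const_mul (Rf m)).congr_deriv ?_
  have hz0 := HCone.ne_zero H.ha hz
  rw [sgIntegral, H.by_parts hz, mul_smul_comm, mul_smul_comm, mul_smul_comm]
  congr 1
  rw [← integral_const_mul_of_integrable hi, ← integral_const_mul_of_integrable (H.int_cube hz),
    ← integral_smul]
  congr 1
  funext y
  have h := H.rel hm hz y
  have h2 : vline y • (Rf m * scaledRes Rf z y ^ 3) - Rf m * scaledRes Rf z y ^ 2 =
      z • ((m • Rf m - 1) * scaledRes Rf z y ^ 3) := by
    have h3 := congrArg (· * scaledRes Rf z y ^ 2) h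
    simp only [smul_mul_assoc, add_mul, mul_assoc, ← pow_succ'] at h3
    rw [h3]; abel_nf
  rw [mul_smul_comm, mul_smul_comm, mul_sub, mul_smul_comm, h2, mul_smul_comm, smul_smul, smul_smul,
    smul_smul]
  congr 1
  field_simp

lemma mul_sg_sub_le (H : PseudoRes Rf U K a) {m : ℂ} (hm : m ∈ U) {t : ℝ} (ht : 0 < t) :
    ‖Rf m * sgIntegral Rf t - Rf m‖ ≤ Real.exp 1 * (‖m • Rf m - 1‖ * (K + K ^ 2)) / 2 * t := by
  have hz := HCone.ofReal H.ha ht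
  have hK := H.K_nonneg
  set B := m • Rf m - 1 with hB
  have e1 : ∀ y : ℝ, Rf m * scaledRes Rf t y ^ 2 - ((vline y ^ 2)⁻¹ : ℂ) • Rf m =
      (t : ℂ) • (((vline y ^ 2)⁻¹ : ℂ) • (B * scaledRes Rf t y) +
        (vline y)⁻¹ • (B * scaledRes Rf t y ^ 2)) := by
    intro y
    have h := H.rel hm hz y
    have hv := vline_ne_zero y
    have h1 : Rf m * scaledRes Rf t y = (vline y)⁻¹ • (Rf m + (t : ℂ) • (B * scaledRes Rf t y)) := by
      rw [← h, smul_smul, inv_mul_cancel₀ hv, one_smul]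
    have h2 : Rf m * scaledRes Rf t y ^ 2 = (vline y)⁻¹ • (Rf m * scaledRes Rf t y +
        (t : ℂ) • (B * scaledRes Rf t y ^ 2)) := by
      rw [pow_two, ← mul_assoc, h1, smul_mul_assoc, add_mul, smul_mul_assoc, mul_assoc B]
      rw [← h1]
    rw [h2, h1, pow_two (vline y), mul_inv]
    module
  have i1 := (H.int_sq hz).const_mul (Rf m)
  have i2 : Integrable fun y : ℝ => (Complex.exp (vline y) * (vline y ^ 2)⁻¹) • Rf m := by
    refine Integrable.smul_const ?_ _
    by_contra hcon
    have := kappa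
    rw [integral_undef hcon] at this
    have h3 := Real.pi_ne_zero
    simp at this
  have e2 : Rf m * sgIntegral Rf t - Rf m = ((2 * Real.pi : ℝ) : ℂ)⁻¹ •
      ∫ y : ℝ, (Rf m * (Complex.exp (vline y) • scaledRes Rf t y ^ 2) -
        (Complex.exp (vline y) * (vline y ^ 2)⁻¹) • Rf m) := by
    rw [integral_sub i1 i2, integral_smul_const, kappa, smul_sub, smul_smul,
      integral_const_mul_of_integrable (H.int_sq hz), sgIntegral, mul_smul_comm]
    have h3 := Real.pi_ne_zero
    have : ((2 * Real.pi : ℝ) : ℂ)⁻¹ * (2 * Real.pi) = 1 := by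
      push_cast
      field_simp
    rw [this, one_smul]
  have hbd : ‖∫ y : ℝ, (Rf m * (Complex.exp (vline y) • scaledRes Rf t y ^ 2) -
        (Complex.exp (vline y) * (vline y ^ 2)⁻¹) • Rf m)‖ ≤
        (Real.exp 1 * (t * (‖B‖ * (K + K ^ 2)))) * Real.pi := by
    refine norm_integral_of_scaled fun y => ?_
    rw [mul_smul_comm, mul_smul, ← smul_sub, e1, norm_smul, norm_exp_vline, norm_smul,
      Complex.norm_real, Real.norm_of_nonneg ht.le, mul_div_assoc, mul_div_assoc]
    refine mul_le_mul_of_nonneg_left (mul_le_mul_of_nonneg_left ?_ ht.le) (Real.exp_pos _).le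
    refine (norm_add_le _ _).trans ?_
    rw [norm_smul, norm_smul, norm_inv, norm_inv, norm_pow, mul_add, add_div]
    have hv := one_le_norm_vline y
    refine add_le_add ?_ ?_
    · rw [div_eq_inv_mul]
      refine mul_le_mul_of_nonneg_left ((norm_mul_le _ _).trans ?_) (by positivity)
      exact mul_le_mul_of_nonneg_left (H.bound' hz y) (norm_nonneg _)
    · calc _ ≤ 1 * (‖B‖ * (K ^ 2 / ‖vline y‖ ^ 2)) := by
            refine mul_le_mul (inv_le_one_of_one_le₀ hv) ((norm_mul_le _ _).trans ?_)
              (norm_nonneg _) zero_le_one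
            exact mul_le_mul_of_nonneg_left (H.bound_sq hz y) (norm_nonneg _)
        _ = _ := by ring
  have hp := Real.pi_pos
  rw [e2, norm_smul, norm_inv, Complex.norm_real, Real.norm_of_nonneg (by positivity)]
  refine (mul_le_mul_of_nonneg_left hbd (by positivity)).trans_eq ?_
  field_simp

lemma mul_sg_tendsto (H : PseudoRes Rf U K a) {m : ℂ} (hm : m ∈ U) :
    Tendsto (fun t : ℝ => Rf m * sgIntegral Rf t) (𝓝[>] 0) (𝓝 (Rf m)) := by
  rw [tendsto_iff_norm_sub_tendsto_zero]
  have hlim : Tendsto (fun t : ℝ =>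
      Real.exp 1 * (‖m • Rf m - 1‖ * (K + K ^ 2)) / 2 * t) (𝓝[>] 0) (𝓝 0) := by
    have : Continuous (fun t : ℝ =>
      Real.exp 1 * (‖m • Rf m - 1‖ * (K + K ^ 2)) / 2 * t) := by fun_prop
    have h := this.tendsto 0
    rw [mul_zero] at h
    exact h.mono_left nhdsWithin_le_nhds
  refine squeeze_zero' (Eventually.of_forall fun _ => norm_nonneg _) ?_ hlim
  filter_upwards [self_mem_nhdsWithin] with t ht
  exact H.mul_sg_sub_le hm ht

end PseudoRes

end BackwardCore2

section BackwardCore3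

variable {E : Type*} [NormedRing E] [NormedAlgebra ℂ E] [CompleteSpace E]

namespace PseudoRes

variable {Rf : ℂ → E} {U : Set ℂ} {K a : ℝ}

lemma sg_real_continuousOn (H : PseudoRes Rf U K a) :
    ContinuousOn (fun t : ℝ => sgIntegral Rf t) (Ioi 0) := by
  intro t ht
  refine ContinuousAt.continuousWithinAt ?_
  exact (H.sg_hasDerivAt (HCone.ofReal H.ha ht)).2.continuousAt.comp
    Complex.continuous_ofReal.continuousAt

lemma mul_sg_real_hasDerivAt (H : PseudoRes Rf U K a) {m : ℂ} (hm : m ∈ U) {t : ℝ} (ht : 0 < t) :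
    HasDerivAt (fun s : ℝ => Rf m * sgIntegral Rf s) ((m • Rf m - 1) * sgIntegral Rf t) t := by
  have h := HasDerivAt.scomp t (H.mul_sg_hasDerivAt hm (HCone.ofReal H.ha ht))
    (Complex.ofRealCLM.hasDerivAt (x := t))
  exact h.congr_deriv (by simp)

lemma laplace (H : PseudoRes Rf U K a) {m : ℂ} (hm : m ∈ U) (hre : 0 < m.re) :
    IntegrableOn (fun t : ℝ => Complex.exp (-m * t) • sgIntegral Rf t) (Ioi 0) ∧
    ∫ t in Ioi (0 : ℝ), Complex.exp (-m * t) • sgIntegral Rf t = Rf m := by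
  have hK := H.K_nonneg
  have hintg : IntegrableOn (fun t : ℝ => Complex.exp (-m * t) • sgIntegral Rf t) (Ioi 0) := by
    refine integrableOn_exp_smul (w := 0) hre H.sg_real_continuousOn
      (M := Real.exp 1 * K ^ 2 / 2) fun t ht => ?_
    simpa using H.norm_sg_le (HCone.ofReal H.ha ht)
  refine ⟨hintg, ?_⟩
  have hd : ∀ t : ℝ, 0 < t → HasDerivAt
      (fun t : ℝ => Complex.exp (-m * t) • (Rf m * sgIntegral Rf t))
      (-(Complex.exp (-m * t) • sgIntegral Rf t)) t := by
    intro t ht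
    have h1 : HasDerivAt (fun s : ℝ => Complex.exp (-m * s)) (-m * Complex.exp (-m * t)) t := by
      have h := ((Complex.ofRealCLM.hasDerivAt (x := t)).const_mul (-m)).cexp
      refine h.congr_deriv ?_
      simp [mul_comm]
    have h2 := H.mul_sg_real_hasDerivAt hm ht
    refine (h1.smul h2).congr_deriv ?_
    rw [sub_mul, one_mul, smul_mul_assoc]
    module
  have h0 : Tendsto (fun t : ℝ => Complex.exp (-m * t) • (Rf m * sgIntegral Rf t)) (𝓝[>] 0)
      (𝓝 (Rf m)) := by
    have hc : Continuous fun t : ℝ => Complex.exp (-m * t) := by fun_prop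
    have h1 := (hc.tendsto 0).mono_left (nhdsWithin_le_nhds (s := Ioi 0))
    have h2 := h1.smul (H.mul_sg_tendsto hm)
    simpa using h2
  have hinf : Tendsto (fun t : ℝ => Complex.exp (-m * t) • (Rf m * sgIntegral Rf t)) atTop
      (𝓝 0) := by
    have hlim : Tendsto (fun t : ℝ => Real.exp (-(m.re * t)) *
        (‖Rf m‖ * (Real.exp 1 * K ^ 2 / 2))) atTop (𝓝 0) := by
      have := (Real.tendsto_exp_neg_atTop_nhds_zero.comp
        (tendsto_id.const_mul_atTop hre)).mul_const (‖Rf m‖ * (Real.exp 1 * K ^ 2 / 2))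
      simpa [Function.comp_def] using this
    refine squeeze_zero_norm' ?_ hlim
    filter_upwards [eventually_gt_atTop 0] with t ht
    rw [norm_smul, norm_cexp_mul_real, Complex.neg_re, neg_mul]
    refine mul_le_mul_of_nonneg_left ((norm_mul_le _ _).trans ?_) (Real.exp_pos _).le
    exact mul_le_mul_of_nonneg_left (H.norm_sg_le (HCone.ofReal H.ha ht)) (norm_nonneg _)
  have key := integral_Ioi_deriv hd hintg.neg h0 hinf
  rw [integral_neg] at key
  exact neg_injective key

lemma sg_mul (H : PseudoRes Rf U K a) {m : ℂ} (hm : m ∈ U) {s t : ℝ} (hs : 0 < s) (ht : 0 < t) :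
    (Rf m * sgIntegral Rf (s : ℂ)) * (Rf m * sgIntegral Rf (t : ℂ)) =
      (Rf m * sgIntegral Rf ((s + t : ℝ) : ℂ)) * Rf m := by
  set S : ℝ → E := fun t => sgIntegral Rf (t : ℂ) with hS
  set R := Rf m with hR
  set r := s + t with hr
  have hr0 : 0 < r := by positivity
  have hcomm : ∀ u : ℝ, 0 < u → R * S u = S u * R := fun u hu =>
    H.comm_sg hm (HCone.ofReal H.ha hu)
  have hder : ∀ u : ℝ, 0 < u → HasDerivAt (fun u => R * S u) ((m • R - 1) * S u) u := fun u hu =>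
    H.mul_sg_real_hasDerivAt hm hu
  have hG : ∀ u ∈ Ioo 0 r, HasDerivAt (fun u => (R * S (r - u)) * (R * S u)) 0 u := by
    intro u hu
    have hu0 : 0 < u := hu.1
    have hru : 0 < r - u := sub_pos.2 hu.2
    have h1 := hder u hu0
    have h2 : HasDerivAt (fun u => R * S (r - u)) (-((m • R - 1) * S (r - u))) u :=
      HasDerivAt.comp_const_sub r u (hder (r - u) hru)
    refine (h2.mul h1).congr_deriv ?_
    have c1 := hcomm u hu0
    have c2 := hcomm _ hru
    have c3 : (m • R - 1) * S (r - u) = S (r - u) * (m • R - 1) := by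
      rw [sub_mul, mul_sub, smul_mul_assoc, mul_smul_comm, c2, one_mul, mul_one]
    have c4 : (m • R - 1) * R = R * (m • R - 1) := by
      rw [sub_mul, mul_sub, smul_mul_assoc, mul_smul_comm, one_mul, mul_one]
    rw [neg_mul, c3, c2, mul_assoc, mul_assoc, ← mul_assoc (m • R - 1), c4, mul_assoc R]
    simp
  have hconst : ∀ u ∈ Ioo 0 r, (R * S (r - u)) * (R * S u) = (R * S (r - t)) * (R * S t) := by
    intro u hu
    have htm : t ∈ Ioo 0 r := ⟨ht, by linarith⟩
    have := (convex_Ioo 0 r).norm_image_sub_le_of_norm_hasDerivWithin_le (C := 0)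
      (fun x hx => (hG x hx).hasDerivWithinAt) (fun x _ => by simp) htm hu
    rw [zero_mul] at this
    exact sub_eq_zero.1 (norm_le_zero_iff.1 this)
  have hlim : Tendsto (fun u => (R * S (r - u)) * (R * S u)) (𝓝[>] 0) (𝓝 ((R * S r) * R)) := by
    refine Tendsto.mul ?_ (H.mul_sg_tendsto hm)
    have hc : ContinuousAt (fun u => R * S (r - u)) 0 := by
      refine ContinuousAt.comp (g := fun u => R * S u) (f := fun u => r - u) ?_ (by fun_prop)
      rw [sub_zero]
      exact (hder r hr0).continuousAt
    have := hc.tendsto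
    simp only [sub_zero] at this
    exact this.mono_left nhdsWithin_le_nhds
  have hlim2 : Tendsto (fun u => (R * S (r - u)) * (R * S u)) (𝓝[>] 0)
      (𝓝 ((R * S (r - t)) * (R * S t))) := by
    refine tendsto_const_nhds.congr' ?_
    filter_upwards [Ioo_mem_nhdsGT hr0] with u hu
    exact (hconst u hu).symm
  have hrt : r - t = s := by rw [hr]; ring
  have := tendsto_nhds_unique hlim2 hlim
  rw [hrt] at this
  exact this

end PseudoRes

end BackwardCore3

section BackwardFinal

/-- The enlarged half plane on which the resolvent is controlled. -/
def bigU (δ : ℝ) : Set ℂ := {ν | ∃ μ : ℂ, 0 < μ.re ∧ ‖ν - μ‖ < δ * ‖μ‖}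

lemma isOpen_bigU (δ : ℝ) : IsOpen (bigU δ) := by
  have : bigU δ = ⋃ μ : ℂ, ⋃ _ : 0 < μ.re, Metric.ball μ (δ * ‖μ‖) := by
    ext ν
    simp [bigU, dist_eq_norm]
  rw [this]
  exact isOpen_iUnion fun μ => isOpen_iUnion fun _ => Metric.isOpen_ball

lemma zero_notMem_bigU {δ : ℝ} (h : δ ≤ 1) : (0 : ℂ) ∉ bigU δ := by
  rintro ⟨μ, _, h2⟩
  rw [zero_sub, norm_neg] at h2
  nlinarith [norm_nonneg μ]

lemma mem_bigU_of_re_pos {δ : ℝ} (h : 0 < δ) {ν : ℂ} (hν : 0 < ν.re) : ν ∈ bigU δ := by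
  refine ⟨ν, hν, ?_⟩
  have : ν ≠ 0 := by rintro rfl; simp at hν
  rw [sub_self, norm_zero]
  have := norm_pos_iff.2 this
  positivity

lemma cone_bigU {δ : ℝ} (h : 0 < δ) {z : ℂ} (hz : z ∈ HCone δ) (y : ℝ) : vline y / z ∈ bigU δ := by
  have hre := HCone.re_pos h hz
  have hz0 := HCone.ne_zero h hz
  have hre0 : (z.re : ℂ) ≠ 0 := by exact_mod_cast hre.ne'
  refine ⟨vline y / (z.re : ℂ), ?_, ?_⟩
  · rw [Complex.div_ofReal_re, vline_re]; positivity
  · have e : vline y / z - vline y / (z.re : ℂ) =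
        (vline y / (z.re : ℂ)) * (((z.re : ℂ) - z) / z) := by field_simp
    have hp : 0 < ‖vline y / (z.re : ℂ)‖ := norm_pos_iff.2 (div_ne_zero (vline_ne_zero y) hre0)
    rw [e, norm_mul, mul_comm δ]
    refine mul_lt_mul_of_pos_left ?_ hp
    have e2 : (z.re : ℂ) - z = -(z.im * Complex.I) := by
      apply Complex.ext <;> simp
    rw [norm_div, div_lt_iff₀ (norm_pos_iff.2 hz0), e2, norm_neg, norm_mul, Complex.norm_I, mul_one,
      Complex.norm_real, Real.norm_eq_abs]
    have h1 : |z.im| < δ * z.re := hz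
    have h2 := Complex.re_le_norm z
    nlinarith

lemma exists_pseudoRes (A : X →ₗ.[ℂ] X) (ω C : ℝ)
    (hA : ∀ ν : ℂ, 0 < ν.re → ∃ R : X →L[ℂ] X, IsResolventOf A (ν + ω) R ∧ ‖ν • R‖ ≤ C) :
    ∃ (Rf : ℂ → X →L[ℂ] X) (U : Set ℂ) (K a : ℝ), PseudoRes Rf U K a ∧
      (∀ ν : ℂ, 0 < ν.re → ν ∈ U) ∧ ∀ ν ∈ U, IsResolventOf A (ν + ω) (Rf ν) := by
  classical
  set D := max C 1 with hD
  have hD1 : 1 ≤ D := le_max_right _ _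
  have hCD : C ≤ D := le_max_left _ _
  set δ := 1 / (2 * D) with hδ
  have hδ0 : 0 < δ := by positivity
  have hδ1 : δ ≤ 1 := by rw [hδ, div_le_one (by positivity)]; linarith
  have hex : ∀ ν : ℂ, ∃ Q : X →L[ℂ] X, ν ∈ bigU δ →
      IsResolventOf A (ν + ω) Q ∧ ‖ν‖ * ‖Q‖ ≤ 4 * D := by
    intro ν
    by_cases hν : ν ∈ bigU δ
    · obtain ⟨μ, hμ, hνμ⟩ := hν
      obtain ⟨R, hR, hRn⟩ := hA μ hμ
      rw [norm_smul] at hRn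
      have h1 : ‖((μ + ω) - (ν + ω)) • R‖ ≤ 1 / 2 := by
        have e : (μ + ω) - (ν + ω) = -(ν - μ) := by ring
        rw [e, norm_smul, norm_neg]
        calc ‖ν - μ‖ * ‖R‖ ≤ (δ * ‖μ‖) * ‖R‖ := by gcongr
          _ = δ * (‖μ‖ * ‖R‖) := by ring
          _ ≤ δ * D := by gcongr; exact hRn.trans hCD
          _ = 1 / 2 := by rw [hδ]; field_simp
      obtain ⟨Q, hQ, hQn⟩ := hR.extend h1
      refine ⟨Q, fun _ => ⟨hQ, ?_⟩⟩
      have h2 : ‖ν‖ ≤ 2 * ‖μ‖ := by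
        have := norm_add_le (ν - μ) μ
        rw [sub_add_cancel] at this
        nlinarith [norm_nonneg μ]
      calc ‖ν‖ * ‖Q‖ ≤ (2 * ‖μ‖) * (2 * ‖R‖) := by gcongr
        _ = 4 * (‖μ‖ * ‖R‖) := by ring
        _ ≤ 4 * D := by gcongr; exact hRn.trans hCD
    · exact ⟨0, fun h => absurd h hν⟩
  choose Rf hRf using hex
  refine ⟨Rf, bigU δ, 4 * D, δ, ?_, fun ν hν => mem_bigU_of_re_pos hδ0 hν,
    fun ν hν => (hRf ν hν).1⟩
  refine ⟨hδ0, isOpen_bigU δ, zero_notMem_bigU hδ1, ?_, fun ν hν => (hRf ν hν).2,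
    fun z hz y => cone_bigU hδ0 hz y⟩
  intro ν hν μ hμ
  have := (hRf μ hμ).1.identity (hRf ν hν).1
  rw [this]
  congr 1
  ring

lemma backward (A : X →ₗ.[ℂ] X) (ω C : ℝ)
    (hA : ∀ ν : ℂ, 0 < ν.re → ∃ R : X →L[ℂ] X, IsResolventOf A (ν + ω) R ∧ ‖ν • R‖ ≤ C) :
    ∃ (S : ℂ → X →L[ℂ] X) (θ M : ℝ), 0 < θ ∧ θ ≤ Real.pi / 2 ∧ 0 < M ∧
      DifferentiableOn ℂ S (Sector θ) ∧ (∀ z ∈ Sector θ, ‖S z‖ ≤ M * Real.exp (ω * z.re)) ∧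
      Generates A (fun t : ℝ => S t) := by
  obtain ⟨Rf, U, K, a, H, hUre, hres⟩ := exists_pseudoRes A ω C hA
  obtain ⟨θ, hθ0, hθ1, hθ⟩ := exists_Sector_subset_HCone H.ha
  have hK := H.K_nonneg
  set M := Real.exp 1 * K ^ 2 / 2 + 1 with hM
  have hM0 : 0 < M := by positivity
  set S : ℂ → X →L[ℂ] X := fun z => Complex.exp (ω * z) • sgIntegral Rf z with hS
  have hbound : ∀ z ∈ HCone a, ‖S z‖ ≤ M * Real.exp (ω * z.re) := by
    intro z hz
    rw [hS, norm_smul, Complex.norm_exp, mul_comm]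
    have h1 : ((ω : ℂ) * z).re = ω * z.re := by simp
    rw [h1]
    refine mul_le_mul_of_nonneg_right ?_ (Real.exp_pos _).le
    have := H.norm_sg_le hz
    linarith
  have hdiff : ∀ z ∈ HCone a, DifferentiableAt ℂ S z := by
    intro z hz
    have h1 : DifferentiableAt ℂ (fun z : ℂ => Complex.exp (ω * z)) z := by fun_prop
    exact h1.smul (H.sg_hasDerivAt hz).2.differentiableAt
  have hlap : ∀ l : ℝ, ω < l → ∀ x : X, Rf ((l - ω : ℝ) : ℂ) x =
      ∫ t in Ioi (0 : ℝ), Real.exp (-l * t) • S t x := by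
    intro l hl x
    have hre : 0 < (((l - ω : ℝ) : ℂ)).re := by rw [Complex.ofReal_re]; linarith
    obtain ⟨h1, h2⟩ := H.laplace (hUre _ hre) hre
    rw [← h2, ContinuousLinearMap.integral_apply h1]
    refine setIntegral_congr_fun measurableSet_Ioi fun t _ => ?_
    simp only [hS, smul_apply]
    rw [← Complex.coe_smul, Complex.ofReal_exp, smul_smul, ← Complex.exp_add]
    congr 2
    push_cast
    ring
  have hgen : ∀ l : ℝ, ω < l → IsResolventOf A (l : ℂ) (Rf ((l - ω : ℝ) : ℂ)) := by
    intro l hl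
    have hre : 0 < (((l - ω : ℝ) : ℂ)).re := by rw [Complex.ofReal_re]; linarith
    have := hres _ (hUre _ hre)
    simpa using this
  refine ⟨S, θ, M, hθ0, hθ1, hM0, fun z hz => (hdiff z (hθ hz)).differentiableWithinAt,
    fun z hz => hbound z (hθ hz), M, ω, ⟨?_, ?_, ⟨hM0, ?_⟩, ?_⟩, ?_⟩
  · intro x t ht
    refine ContinuousAt.continuousWithinAt ?_
    have h1 : ContinuousAt (fun t : ℝ => S t) t :=
      ContinuousAt.comp (g := S) (hdiff _ (HCone.ofReal H.ha ht)).continuousAt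
        Complex.continuous_ofReal.continuousAt
    exact h1.clm_apply continuousAt_const
  · intro s t hs ht
    have hre : 0 < (1 : ℂ).re := by simp
    have hm := hUre 1 hre
    have h := H.sg_mul hm hs ht
    have hinj : ∀ x, Rf 1 x = 0 → x = 0 := fun x hx => (hres 1 hm).injective hx
    have key : sgIntegral Rf ((s + t : ℝ) : ℂ) = sgIntegral Rf (s : ℂ) * sgIntegral Rf (t : ℂ) := by
      have c1 := H.comm_sg hm (HCone.ofReal H.ha hs)
      have c2 := H.comm_sg hm (HCone.ofReal H.ha (add_pos hs ht))
      have h2 : Rf 1 * (Rf 1 * (sgIntegral Rf (s : ℂ) * sgIntegral Rf (t : ℂ) -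
          sgIntegral Rf ((s + t : ℝ) : ℂ))) = 0 := by
        rw [mul_sub, mul_sub, sub_eq_zero]
        rw [mul_assoc, ← mul_assoc _ (Rf 1), ← c1, mul_assoc (Rf 1) (sgIntegral Rf _), mul_assoc,
          ← c2] at h
        exact h
      refine (sub_eq_zero.1 ?_).symm
      ext x
      have h3 := congrArg (fun T : X →L[ℂ] X => T x) h2
      exact hinj _ (hinj _ h3)
    simp only [hS]
    rw [key]
    ext x
    simp only [smul_apply, ContinuousLinearMap.comp_apply,
      map_smul, smul_smul, ← Complex.exp_add]
    refine congrArg (fun c : ℂ => c • sgIntegral Rf (s : ℂ) (sgIntegral Rf (t : ℂ) x)) ?_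
    congr 1
    push_cast
    ring
  · intro t ht
    simpa using hbound _ (HCone.ofReal H.ha ht)
  · intro x hx
    refine (hgen (ω + 1) (by linarith)).injective ?_
    rw [hlap (ω + 1) (by linarith)]
    rw [setIntegral_congr_fun (g := fun _ => (0 : X)) measurableSet_Ioi fun t ht => ?_]
    · simp
    · simp only [hx t ht, smul_zero]
  · intro l hl
    exact ⟨_, hgen l hl, hlap l hl⟩

lemma backward_one (A : X →ₗ.[ℂ] X)
    (h : ∃ ω : ℝ, ∃ C : ℝ, ∀ l : ℂ, ω < l.re →
        ∃ R : X →L[ℂ] X, IsResolventOf A l R ∧ ‖l • R‖ ≤ C) :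
    ∃ T : ℝ → X →L[ℂ] X, Generates A T ∧ IsHolomorphicSG T := by
  obtain ⟨ω, C, hA⟩ := h
  have hw0 : 0 ≤ max ω 0 := le_max_right _ _
  have hw1 : ω ≤ max ω 0 := le_max_left _ _
  have hA' : ∀ ν : ℂ, 0 < ν.re → ∃ R : X →L[ℂ] X,
      IsResolventOf A (ν + (max ω 0 : ℝ)) R ∧ ‖ν • R‖ ≤ C := by
    intro ν hν
    obtain ⟨R, hR, hRn⟩ := hA (ν + (max ω 0 : ℝ)) (by simp; linarith)
    refine ⟨R, hR, le_trans ?_ hRn⟩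
    rw [norm_smul, norm_smul]
    refine mul_le_mul_of_nonneg_right ?_ (norm_nonneg _)
    rw [← abs_of_nonneg (norm_nonneg ν), ← abs_of_nonneg (norm_nonneg (ν + (max ω 0 : ℝ))),
      ← sq_le_sq, Complex.sq_norm, Complex.sq_norm, Complex.normSq_apply, Complex.normSq_apply]
    simp only [Complex.add_re, Complex.add_im, Complex.ofReal_re, Complex.ofReal_im, add_zero]
    nlinarith
  obtain ⟨S, θ, M, hθ0, hθ1, hM, hd, hb, hg⟩ := backward A (max ω 0) C hA'
  refine ⟨fun t => S t, hg, θ, hθ0, hθ1, S, hd, fun _ _ => rfl, M * Real.exp (max ω 0), ?_⟩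
  intro z hz hz1
  refine (hb z hz).trans ?_
  have h1 := (Complex.re_le_norm z).trans hz1
  gcongr
  nlinarith

lemma backward_two (A : X →ₗ.[ℂ] X)
    (h : ∃ C : ℝ, ∀ l : ℂ, 0 < l.re →
        ∃ R : X →L[ℂ] X, IsResolventOf A l R ∧ ‖l • R‖ ≤ C) :
    ∃ T : ℝ → X →L[ℂ] X, Generates A T ∧ IsBoundedHolomorphicSG T := by
  obtain ⟨C, hA⟩ := h
  obtain ⟨S, θ, M, hθ0, hθ1, hM, hd, hb, hg⟩ := backward A 0 C (by simpa using hA)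
  refine ⟨fun t => S t, hg, θ, hθ0, hθ1, S, hd, fun _ _ => rfl, M, ?_⟩
  intro z hz
  simpa using hb z hz

end BackwardFinal

/-- `A` generates a holomorphic semigroup iff for some `ω ∈ ℝ` the half plane
`{Re λ > ω}` lies in the resolvent set of `A` and `sup_{Re λ > ω} ‖λ R(λ, A)‖ < ∞`;
and `A` generates a bounded holomorphic semigroup iff this holds with `ω = 0`. -/
theorem generates_holomorphic_iff_resolvent_estimate (A : X →ₗ.[ℂ] X) :
    ((∃ T : ℝ → X →L[ℂ] X, Generates A T ∧ IsHolomorphicSG T) ↔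
      (∃ ω : ℝ, ∃ C : ℝ, ∀ l : ℂ, ω < l.re →
        ∃ R : X →L[ℂ] X, IsResolventOf A l R ∧ ‖l • R‖ ≤ C)) ∧
    ((∃ T : ℝ → X →L[ℂ] X, Generates A T ∧ IsBoundedHolomorphicSG T) ↔
      (∃ C : ℝ, ∀ l : ℂ, 0 < l.re →
        ∃ R : X →L[ℂ] X, IsResolventOf A l R ∧ ‖l • R‖ ≤ C)) := by
  exact ⟨⟨fun ⟨_, hT, hh⟩ => forward_one hT hh, backward_one A⟩,
    ⟨fun ⟨_, hT, hh⟩ => forward_two hT hh, backward_two A⟩⟩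
end

section
/- Let A be the generator of a holomorphic semigroup T on a complex Banach space X. Then the following are equivalent: (i) T is exponentially stable; (ii) Re λ < 0 for every λ ∈ σ(A). -/
open MeasureTheory Set

variable {X : Type*} [NormedAddCommGroup X] [NormedSpace ℂ X] [CompleteSpace X]

/-- The spectrum of the (unbounded) operator `A`: the complement of the resolvent set. -/
def spectrumOf (A : X →ₗ.[ℂ] X) : Set ℂ :=
  {l : ℂ | ¬ ∃ R : X →L[ℂ] X, IsResolventOf A l R}

theorem exists_char_of_not_isUnit {E : Type*} [NormedRing E] [NormedAlgebra ℂ E] [CompleteSpace E]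
    (S : Set E) (hS : ∀ a ∈ S, ∀ b ∈ S, a * b = b * a) (u : E)
    (hu : u ∈ S.centralizer.centralizer) (hnu : ¬ IsUnit u) :
    ∃ ψ : E →L[ℂ] ℂ, ψ 1 = 1 ∧ ψ u = 0 ∧
      ∀ a ∈ S.centralizer.centralizer, ∀ b ∈ S.centralizer.centralizer, ψ (a * b) = ψ a * ψ b := by
  let B : Subalgebra ℂ E := Subalgebra.centralizer ℂ S.centralizer
  have hB : ∀ a, a ∈ B ↔ a ∈ S.centralizer.centralizer := fun a => Iff.rfl
  have hcl : IsClosed (B : Set E) := by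
    have : (B : Set E) = S.centralizer.centralizer := rfl
    rw [this]
    have h2 : S.centralizer.centralizer = ⋂ m ∈ S.centralizer, {c : E | m * c = c * m} := by
      ext c; simp [Set.mem_centralizer_iff]
    rw [h2]
    exact isClosed_biInter fun m _ => isClosed_eq (by fun_prop) (by fun_prop)
  have hcomm : ∀ a b : B, a * b = b * a := by
    intro a b
    exact Subtype.ext (Set.centralizer_centralizer_comm_of_comm hS _ a.2 _ b.2)
  let _ : NormedCommRing B := { (inferInstance : NormedRing B) with mul_comm := hcomm }
  have : CompleteSpace B := hcl.completeSpace_coe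
  have hnuB : ¬ IsUnit (⟨u, hu⟩ : B) := fun h => hnu (h.map B.val)
  obtain ⟨φ, hφ⟩ := WeakDual.CharacterSpace.exists_apply_eq_zero (A := B) hnuB
  let φ' : B →ₐ[ℂ] ℂ := WeakDual.CharacterSpace.toAlgHom φ
  let φL : (Subalgebra.toSubmodule B) →L[ℂ] ℂ :=
    LinearMap.mkContinuous (φ'.toLinearMap : (Subalgebra.toSubmodule B) →ₗ[ℂ] ℂ) ‖(1 : B)‖ (fun x => by
      have := AlgHom.norm_apply_le_self_mul_norm_one (A := B) φ' x
      rw [mul_comm]; exact this)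
  obtain ⟨ψ, hψ, -⟩ := exists_extension_norm_eq (Subalgebra.toSubmodule B) φL
  have key : ∀ b : B, ψ (b : E) = φ' b := fun b => hψ b
  refine ⟨ψ, ?_, ?_, ?_⟩
  · have := key 1
    rw [map_one] at this; exact this
  · rw [key ⟨u, hu⟩]; exact hφ
  · intro a ha b hb
    rw [key ⟨a, ha⟩, key ⟨b, hb⟩, ← map_mul]
    exact key (⟨a, ha⟩ * ⟨b, hb⟩)

theorem isUnit_char_ne_zero {E : Type*} [NormedRing E] [NormedAlgebra ℂ E]
    (S : Set E) (u : E) (hu : u ∈ S.centralizer.centralizer) (hU : IsUnit u)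
    (ψ : E →L[ℂ] ℂ) (h1 : ψ 1 = 1)
    (hm : ∀ a ∈ S.centralizer.centralizer, ∀ b ∈ S.centralizer.centralizer,
      ψ (a * b) = ψ a * ψ b) : ψ u ≠ 0 := by
  obtain ⟨v, rfl⟩ := hU
  have hv : ((v⁻¹ : Eˣ) : E) ∈ S.centralizer.centralizer := by
    intro m hmm
    exact (Commute.units_inv_right (show Commute m v from hu m hmm))
  intro h
  have := hm _ hu _ hv
  rw [Units.mul_inv, h1, h, zero_mul] at this
  exact one_ne_zero this

theorem scalar_semigroup (f : ℝ → ℂ) (μ : ℝ) (hc : ContinuousOn f (Ioi 0))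
    (hf : ∀ s t, 0 < s → 0 < t → f (s + t) = f s * f t)
    (hInt : IntegrableOn (fun t => (Real.exp (-μ * t) : ℂ) * f t) (Ioi 0))
    (ρ : ℂ) (hρ : ρ = ∫ t in Ioi (0:ℝ), (Real.exp (-μ * t) : ℂ) * f t) :
    (ρ = 0 → ∀ t, 0 < t → f t = 0) ∧
    (ρ ≠ 0 → ∀ t, 0 < t → f t = Complex.exp ((μ - 1 / ρ) * t)) := by
  set g : ℝ → ℂ := fun t => (Real.exp (-μ * t) : ℂ) * f t with hg
  set G : ℝ → ℂ := fun s => ρ - ∫ t in (0:ℝ)..s, g t with hG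
  have hgc : ContinuousOn g (Ioi 0) := by
    apply ContinuousOn.mul _ hc
    exact Continuous.continuousOn (by fun_prop)
  have hii : ∀ s, 0 ≤ s → IntervalIntegrable g volume 0 s := by
    intro s hs
    rw [intervalIntegrable_iff_integrableOn_Ioc_of_le hs]
    exact hInt.mono_set Ioc_subset_Ioi_self
  have hGtail : ∀ s, 0 ≤ s → G s = ∫ t in Ioi s, g t := by
    intro s hs
    have := intervalIntegral.integral_interval_add_Ioi hInt (hInt.mono_set (Ioi_subset_Ioi hs))
    simp only [hG, hρ]
    rw [← this]; ring
  have hGg : ∀ s, 0 < s → G s = ρ * g s := by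
    intro s hs
    rw [hGtail s hs.le, hρ, ← integral_mul_const]
    have := (measurePreserving_add_right (volume : Measure ℝ) s).setIntegral_preimage_emb
      (measurableEmbedding_addRight s) g (Ioi s)
    rw [show (fun x : ℝ => x + s) ⁻¹' Ioi s = Ioi 0 by ext; simp] at this
    rw [← this]
    refine setIntegral_congr_fun measurableSet_Ioi ?_
    intro t ht
    simp only [hg]
    rw [hf t s ht hs, mul_add, Real.exp_add]
    push_cast; ring
  have hGd : ∀ s, 0 < s → HasDerivAt G (- g s) s := by
    intro s hs
    have := intervalIntegral.integral_hasDerivAt_right (hii s hs.le)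
      (hgc.stronglyMeasurableAtFilter isOpen_Ioi s hs) (hgc.continuousAt (Ioi_mem_nhds hs))
    exact this.const_sub ρ
  have hG0 : G 0 = ρ := by simp [hG]
  have hexp : ∀ t : ℝ, (Real.exp (-μ * t) : ℂ) ≠ 0 := fun t => by
    exact_mod_cast (Real.exp_pos _).ne'
  constructor
  · intro h0 t ht
    have h1 := hGd t ht
    have h2 : HasDerivAt G 0 t := by
      refine (hasDerivAt_const t (0:ℂ)).congr_of_eventuallyEq ?_
      filter_upwards [Ioi_mem_nhds ht] with s hs
      rw [hGg s hs, h0, zero_mul]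
    have h3 := h1.unique h2
    rw [neg_eq_zero] at h3
    exact (mul_eq_zero.mp h3).resolve_left (hexp t)
  · intro h0 t ht
    let H : ℝ → ℂ := fun s => Complex.exp (s / ρ) * G s
    have hHd : ∀ s ∈ Ioo 0 t, HasDerivAt H 0 s := by
      intro s hs
      have e1 : HasDerivAt (fun s : ℝ => Complex.exp (s / ρ)) (Complex.exp (s / ρ) * (1 / ρ)) s :=
        ((Complex.ofRealCLM.hasDerivAt (x := s)).div_const ρ).cexp
      have := e1.mul (hGd s hs.1)
      refine this.congr_deriv ?_
      rw [hGg s hs.1]; field_simp; ring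
    have hGcont : ContinuousOn G (Icc 0 t) := by
      refine continuousOn_const.sub ?_
      have := intervalIntegral.continuousOn_primitive_interval (f := g) (μ := volume) (a := 0) (b := t)
        (by rw [uIcc_of_le ht.le]; rw [integrableOn_Icc_iff_integrableOn_Ioc]; exact hInt.mono_set Ioc_subset_Ioi_self)
      rwa [uIcc_of_le ht.le] at this
    have hHc : ContinuousOn H (Icc 0 t) :=
      (Continuous.continuousOn (by fun_prop)).mul hGcont
    have hconst : H t = H 0 := by
      have := intervalIntegral.integral_eq_sub_of_hasDerivAt_of_le ht.le hHc hHd (by simp)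
      rw [intervalIntegral.integral_zero] at this
      exact (sub_eq_zero.mp this.symm)
    simp only [H, hG0, hGg t ht, hg] at hconst
    simp only [Complex.ofReal_zero, zero_div, Complex.exp_zero, one_mul] at hconst
    have h5 : Complex.exp (t/ρ) * Real.exp (-μ * t) * f t = 1 := by
      apply mul_left_cancel₀ h0
      linear_combination hconst
    have h6 : Complex.exp ((μ - 1 / ρ) * t) * (Complex.exp (t/ρ) * Real.exp (-μ * t)) = 1 := by
      push_cast
      rw [← Complex.exp_add, ← Complex.exp_add]
      rw [show ((μ - 1 / ρ) * t + (t / ρ + -μ * t) : ℂ) = 0 by ring, Complex.exp_zero]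
    linear_combination (Complex.exp ((μ - 1 / ρ) * t)) * h5 - f t * h6

theorem resolvent_of_isUnit (A : X →ₗ.[ℂ] X) (m l : ℂ) (R : X →L[ℂ] X) (hR : IsResolventOf A m R)
    (hU : IsUnit (1 + (l - m) • R)) : ∃ R', IsResolventOf A l R' := by
  obtain ⟨U, hU⟩ := hU
  have h1 : ∀ x, (U⁻¹ : (X →L[ℂ] X)ˣ).val x + (l - m) • R ((U⁻¹ : (X →L[ℂ] X)ˣ).val x) = x := by
    intro x
    have := congrArg (fun F : X →L[ℂ] X => F x) U.mul_inv
    rw [hU] at this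
    simpa using this
  have h2 : ∀ x, (U⁻¹ : (X →L[ℂ] X)ˣ).val (x + (l - m) • R x) = x := by
    intro x
    have := congrArg (fun F : X →L[ℂ] X => F x) U.inv_mul
    rw [hU] at this
    simpa using this
  refine ⟨R.comp (U⁻¹ : (X →L[ℂ] X)ˣ).val, ?_, ?_⟩
  · intro x
    obtain ⟨hx, e⟩ := hR.1 ((U⁻¹ : (X →L[ℂ] X)ˣ).val x)
    refine ⟨hx, ?_⟩
    have h3 := h1 x
    change l • R ((U⁻¹ : (X →L[ℂ] X)ˣ).val x) - A ⟨R ((U⁻¹ : (X →L[ℂ] X)ˣ).val x), hx⟩ = x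
    calc _ = (m • R ((U⁻¹ : (X →L[ℂ] X)ˣ).val x) - A ⟨R ((U⁻¹ : (X →L[ℂ] X)ˣ).val x), hx⟩)
          + (l - m) • R ((U⁻¹ : (X →L[ℂ] X)ˣ).val x) := by module
      _ = x := by rw [e, h3]
  · intro y
    have e := hR.2 y
    have h3 := h2 (m • (y : X) - A y)
    rw [e] at h3
    change R ((U⁻¹ : (X →L[ℂ] X)ˣ).val (l • (y : X) - A y)) = y
    rw [show l • (y : X) - A y = m • (y : X) - A y + (l - m) • (y : X) by module, h3, e]

theorem resolvent_rel (A : X →ₗ.[ℂ] X) (m l : ℂ) (R R' : X →L[ℂ] X) (hR : IsResolventOf A m R)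
    (hR' : IsResolventOf A l R') : (1 + (l - m) • R) * (1 + (m - l) • R') = 1 := by
  ext x
  obtain ⟨hx, e⟩ := hR'.1 x
  have h := hR.2 ⟨R' x, hx⟩
  have h2 : m • R' x - A ⟨R' x, hx⟩ = x + (m - l) • R' x := by
    nth_rewrite 3 [← e]; module
  simp only at h
  rw [h2] at h
  change (x + (m - l) • R' x) + (l - m) • R (x + (m - l) • R' x) = x
  rw [h]; module

theorem isUnit_of_resolvent (A : X →ₗ.[ℂ] X) (m l : ℂ) (R R' : X →L[ℂ] X)
    (hR : IsResolventOf A m R) (hR' : IsResolventOf A l R') : IsUnit (1 + (l - m) • R) :=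
  ⟨⟨_, _, resolvent_rel A m l R R' hR hR', resolvent_rel A l m R' R hR' hR⟩, rfl⟩

theorem normContinuousOn (T : ℝ → X →L[ℂ] X) (hhol : IsHolomorphicSG T) :
    ContinuousOn T (Ioi 0) := by
  obtain ⟨θ, hθ, -, S, hS, hST, -⟩ := hhol
  have h : ContinuousOn (fun t : ℝ => S (t : ℂ)) (Ioi 0) := by
    refine hS.continuousOn.comp Complex.continuous_ofReal.continuousOn ?_
    intro t ht
    refine ⟨by exact_mod_cast (ne_of_gt ht), ?_⟩
    rw [Complex.arg_ofReal_of_nonneg (le_of_lt ht)]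
    simpa using hθ
  exact h.congr fun t ht => (hST t ht).symm

theorem exp_stable_of_norm_lt_one (T : ℝ → X →L[ℂ] X) (M ω : ℝ) (hM : 0 < M)
    (hadd : ∀ s t : ℝ, 0 < s → 0 < t → T (s + t) = (T s).comp (T t))
    (hb : ∀ t : ℝ, 0 < t → ‖T t‖ ≤ M * Real.exp (ω * t))
    (n : ℝ) (hn : 0 < n) (h1 : ‖T n‖ < 1) :
    ∃ M ε : ℝ, 0 < M ∧ 0 < ε ∧ ∀ t : ℝ, 0 < t → ‖T t‖ ≤ M * Real.exp (-ε * t) := by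
  obtain ⟨q, hq1, hq0, hq⟩ : ∃ q : ℝ, q < 1 ∧ 0 < q ∧ ‖T n‖ ≤ q :=
    ⟨max ‖T n‖ (1/2), max_lt h1 (by norm_num), lt_max_of_lt_right (by norm_num), le_max_left _ _⟩
  have hlog : Real.log q < 0 := Real.log_neg hq0 hq1
  set ε : ℝ := -Real.log q / n with hε
  have hεp : 0 < ε := div_pos (by linarith) hn
  have hqe : Real.exp (-ε * n) = q := by
    rw [hε, show -(-Real.log q / n) * n = Real.log q by field_simp, Real.exp_log hq0]
  set C : ℝ := M * Real.exp (|ω| * n) with hC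
  have hCp : 0 < C := by positivity
  have key : ∀ k : ℕ, ∀ s, 0 < s → s ≤ n → ‖T (s + k * n)‖ ≤ C * q ^ k := by
    intro k
    induction k with
    | zero =>
      intro s hs hsn
      simp only [Nat.cast_zero, zero_mul, add_zero, pow_zero, mul_one]
      refine (hb s hs).trans ?_
      rw [hC]
      gcongr
      exact le_abs_self ω
    | succ k ih =>
      intro s hs hsn
      have : s + ((k + 1 : ℕ) : ℝ) * n = (s + k * n) + n := by push_cast; ring
      rw [this, hadd _ _ (by positivity) hn, pow_succ, ← mul_assoc]
      refine (ContinuousLinearMap.opNorm_comp_le _ _).trans ?_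
      exact mul_le_mul (ih s hs hsn) hq (norm_nonneg _) (by positivity)
  refine ⟨C * Real.exp (ε * n), ε, by positivity, hεp, ?_⟩
  intro t ht
  set k : ℕ := ⌈t / n⌉₊ - 1 with hk
  have hpos : 0 < ⌈t / n⌉₊ := Nat.ceil_pos.mpr (by positivity)
  have hk1 : ((k : ℝ) + 1) = ⌈t / n⌉₊ := by
    rw [hk]; exact_mod_cast Nat.sub_add_cancel hpos
  have hle : t / n ≤ k + 1 := by rw [hk1]; exact Nat.le_ceil _
  have hlt : (k : ℝ) < t / n := by
    have := Nat.ceil_lt_add_one (show 0 ≤ t / n by positivity)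
    rw [← hk1] at this; linarith
  rw [div_le_iff₀ hn] at hle
  rw [lt_div_iff₀ hn] at hlt
  have := key k (t - k * n) (by linarith) (by linarith)
  rw [sub_add_cancel] at this
  refine this.trans ?_
  rw [mul_assoc C, ← Real.exp_add, ← hqe, ← Real.exp_nat_mul]
  gcongr
  nlinarith

/-- a holomorphic semigroup is exponentially stable iff the spectrum of its
generator lies in the open left half plane. -/
theorem holomorphic_exponentially_stable_iff_spectrum
    (A : X →ₗ.[ℂ] X) (T : ℝ → X →L[ℂ] X)
    (hgen : Generates A T) (hhol : IsHolomorphicSG T) :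
    (∃ M ε : ℝ, 0 < M ∧ 0 < ε ∧ ∀ t : ℝ, 0 < t → ‖T t‖ ≤ M * Real.exp (-ε * t)) ↔
    (∀ l ∈ spectrumOf A, l.re < 0) := by
  obtain ⟨M, ω, ⟨-, hadd, ⟨hM, hb⟩, -⟩, hG⟩ := hgen
  have hTc := normContinuousOn T hhol
  obtain ⟨R, hR, hRT⟩ := hG (ω + 1) (by linarith)
  set μ : ℝ := ω + 1 with hμ
  set S : Set (X →L[ℂ] X) := T '' Ioi 0 with hS
  have hScomm : ∀ a ∈ S, ∀ b ∈ S, a * b = b * a := by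
    rintro _ ⟨s, hs, rfl⟩ _ ⟨t, ht, rfl⟩
    change (T s).comp (T t) = (T t).comp (T s)
    rw [← hadd s t hs ht, ← hadd t s ht hs, add_comm]
  have hTS : ∀ t, 0 < t → T t ∈ S.centralizer.centralizer := fun t ht =>
    Set.subset_centralizer_centralizer ⟨t, ht, rfl⟩
  have hInt : IntegrableOn (fun t => (Real.exp (-μ * t) : ℂ) • T t) (Ioi 0) := by
    have hexp : IntegrableOn (fun t => M * Real.exp (-1 * t)) (Ioi (0:ℝ)) :=
      (exp_neg_integrableOn_Ioi 0 one_pos).const_mul M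
    refine Integrable.mono' hexp ?_ ?_
    · refine ContinuousOn.aestronglyMeasurable ?_ measurableSet_Ioi
      have hce : Continuous fun t : ℝ => (Real.exp (-μ * t) : ℂ) := by fun_prop
      exact hce.continuousOn.smul hTc
    · refine (ae_restrict_iff' measurableSet_Ioi).mpr (Filter.Eventually.of_forall fun t ht => ?_)
      rw [norm_smul, Complex.norm_real, Real.norm_of_nonneg (Real.exp_pos _).le]
      calc Real.exp (-μ * t) * ‖T t‖ ≤ Real.exp (-μ * t) * (M * Real.exp (ω * t)) := by
            gcongr; exact hb t ht
        _ = M * (Real.exp (-μ * t) * Real.exp (ω * t)) := by ring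
        _ = M * Real.exp (-1 * t) := by
            rw [← Real.exp_add, hμ]; ring_nf
  have hRint : R = ∫ t in Ioi (0:ℝ), (Real.exp (-μ * t) : ℂ) • T t := by
    ext x
    rw [hRT x, ContinuousLinearMap.integral_apply hInt]
    rfl
  have hRS : R ∈ S.centralizer.centralizer := by
    intro m hm
    have e1 : m * R = ContinuousLinearMap.mul ℂ (X →L[ℂ] X) m R := rfl
    have e2 : R * m = (ContinuousLinearMap.mul ℂ (X →L[ℂ] X)).flip m R := rfl
    rw [e1, e2, hRint, ← ContinuousLinearMap.integral_comp_comm _ hInt,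
      ← ContinuousLinearMap.integral_comp_comm _ hInt]
    refine setIntegral_congr_fun measurableSet_Ioi fun t ht => ?_
    have := hm (T t) ⟨t, ht, rfl⟩
    simp only [map_smul, ContinuousLinearMap.mul_apply', ContinuousLinearMap.flip_apply, this]
  have hUS : ∀ l : ℂ, (1 + (l - μ) • R) ∈ S.centralizer.centralizer := by
    intro l
    have : (1 + (l - μ) • R) ∈ Subalgebra.centralizer ℂ S.centralizer :=
      add_mem (one_mem _) (Subalgebra.smul_mem _ hRS _)
    exact this
  have hchar : ∀ ψ : (X →L[ℂ] X) →L[ℂ] ℂ, (∀ a ∈ S.centralizer.centralizer,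
      ∀ b ∈ S.centralizer.centralizer, ψ (a * b) = ψ a * ψ b) →
      (ψ R = 0 → ∀ t, 0 < t → ψ (T t) = 0) ∧
      (ψ R ≠ 0 → ∀ t : ℝ, 0 < t → ψ (T t) = Complex.exp ((μ - 1 / ψ R) * t)) := by
    intro ψ hψ
    refine scalar_semigroup (fun t => ψ (T t)) μ (ψ.continuous.comp_continuousOn hTc) ?_ ?_ _ ?_
    · intro s t hs ht
      rw [hadd s t hs ht]
      exact hψ _ (hTS s hs) _ (hTS t ht)
    · have := ψ.integrable_comp hInt
      simp only [map_smul, smul_eq_mul] at this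
      exact this
    · rw [hRint, ← ContinuousLinearMap.integral_comp_comm _ hInt]
      simp only [map_smul, smul_eq_mul]
  constructor
  · rintro ⟨M', ε, hM', hε, hst⟩ l hl
    by_contra! hre
    apply hl
    refine resolvent_of_isUnit A μ l R hR ?_
    by_contra hnu
    obtain ⟨ψ, h1, h0, hm⟩ := exists_char_of_not_isUnit S hScomm _ (hUS l) hnu
    simp only [map_add, h1, map_smul, smul_eq_mul] at h0
    have hne : ψ R ≠ 0 := by
      intro h; rw [h] at h0; simp at h0
    have ha : (μ - 1 / ψ R : ℂ) = l := by
      field_simp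
      linear_combination -h0
    have hf := (hchar ψ hm).2 hne
    rw [ha] at hf
    have hbd : ∀ t : ℝ, 0 < t → 1 ≤ ‖ψ‖ * (M' * Real.exp (-ε * t)) := by
      intro t ht
      have e := congrArg norm (hf t ht)
      rw [Complex.norm_exp] at e
      have : (1:ℝ) ≤ Real.exp ((l * t).re) := by
        rw [Real.one_le_exp_iff]; simp; positivity
      rw [← e] at this
      refine this.trans ((ψ.le_opNorm _).trans ?_)
      gcongr
      exact hst t ht
    have hlim : Filter.Tendsto (fun t : ℝ => ‖ψ‖ * (M' * Real.exp (-ε * t))) Filter.atTop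
        (nhds (‖ψ‖ * (M' * 0))) := by
      refine (Filter.Tendsto.const_mul _ (Filter.Tendsto.const_mul _ ?_))
      refine Real.tendsto_exp_atBot.comp ?_
      exact Filter.tendsto_id.const_mul_atTop_of_neg (by linarith)
    have := ge_of_tendsto hlim (Filter.eventually_atTop.mpr
      ⟨1, fun t ht => hbd t (by linarith)⟩)
    norm_num at this
  · intro hsp
    have hspec : ∀ z ∈ spectrum ℂ (T 1), ‖z‖₊ < 1 := by
      intro z hz
      have hnu : ¬ IsUnit (algebraMap ℂ (X →L[ℂ] X) z - T 1) := hz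
      have hmem : algebraMap ℂ (X →L[ℂ] X) z - T 1 ∈ S.centralizer.centralizer := by
        have : algebraMap ℂ (X →L[ℂ] X) z - T 1 ∈ Subalgebra.centralizer ℂ S.centralizer :=
          sub_mem (Subalgebra.algebraMap_mem _ _) (hTS 1 one_pos)
        exact this
      obtain ⟨ψ, h1, h0, hm⟩ := exists_char_of_not_isUnit S hScomm _ hmem hnu
      rw [Algebra.algebraMap_eq_smul_one] at h0
      simp only [map_sub, h1, map_smul, smul_eq_mul, mul_one] at h0
      have hz1 : z = ψ (T 1) := sub_eq_zero.mp h0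
      rw [← NNReal.coe_lt_coe, coe_nnnorm, NNReal.coe_one, hz1]
      by_cases hρ : ψ R = 0
      · rw [(hchar ψ hm).1 hρ 1 one_pos]; simp
      · rw [(hchar ψ hm).2 hρ 1 one_pos, Complex.ofReal_one, mul_one, Complex.norm_exp,
          Real.exp_lt_one_iff]
        by_contra! hre
        have hns : (μ - 1 / ψ R : ℂ) ∉ spectrumOf A := fun h => absurd (hsp _ h) (not_lt.mpr hre)
        have hex : ∃ R', IsResolventOf A (μ - 1 / ψ R : ℂ) R' := not_not.mp hns
        obtain ⟨R', hR'⟩ := hex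
        refine isUnit_char_ne_zero S _ (hUS _) (isUnit_of_resolvent A μ _ R R' hR hR') ψ h1 hm ?_
        simp only [map_add, h1, map_smul, smul_eq_mul]
        field_simp; ring
    rcases subsingleton_or_nontrivial X with hX | hX
    · refine ⟨1, 1, one_pos, one_pos, fun t ht => ?_⟩
      rw [Subsingleton.elim (T t) 0, norm_zero]; positivity
    · have hr := spectrum.spectralRadius_lt_of_forall_lt (T 1) hspec
      have hlim := spectrum.pow_nnnorm_pow_one_div_tendsto_nhds_spectralRadius (T 1)
      have hev := (hlim.eventually (gt_mem_nhds hr)).and (Filter.eventually_gt_atTop 0)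
      obtain ⟨n, hn, hn0⟩ := hev.exists
      have hpow : ∀ k : ℕ, T 1 ^ (k + 1) = T ((k + 1 : ℕ) : ℝ) := by
        intro k
        induction k with
        | zero => simp
        | succ k ih =>
          rw [pow_succ, ih, Nat.cast_succ (k + 1), hadd _ _ (by positivity) one_pos]
          rfl
      have hTn : T 1 ^ n = T (n : ℝ) := by
        obtain ⟨k, rfl⟩ := Nat.exists_eq_succ_of_ne_zero hn0.ne'
        exact hpow k
      rw [hTn] at hn
      have hlt : ‖T (n : ℝ)‖ < 1 := by
        by_contra! hge
        have : (1 : ENNReal) ≤ (‖T (n:ℝ)‖₊ : ENNReal) ^ (1 / n : ℝ) := by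
          refine ENNReal.one_le_rpow ?_ (by positivity)
          exact_mod_cast hge
        exact absurd hn (not_lt.mpr (by simpa using this))
      exact exp_stable_of_norm_lt_one T M ω hM hadd hb n (by exact_mod_cast hn0) hlt
end

section
/- Let X be a complex Banach space and let T be a bounded linear operator on X such that T² is compact. If I − T is injective, then I − T is surjective. -/
open Filter Topology in
theorem aux_antilipschitz
    {X : Type*} [NormedAddCommGroup X] [NormedSpace ℂ X]
    (T : X →L[ℂ] X) (hc : IsCompactOperator (T.comp T))
    (hinj : Function.Injective (ContinuousLinearMap.id ℂ X - T)) :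
    ∃ K, AntilipschitzWith K (ContinuousLinearMap.id ℂ X - T) := by
  set S := ContinuousLinearMap.id ℂ X - T with hS
  rw [antilipschitzWith_iff_exists_mul_le_norm]
  by_contra! h
  have hK : ∀ ε > 0, ∃ x, ‖x‖ = 1 ∧ ‖S x‖ < ε := by
    intro ε hε
    obtain ⟨x, hx⟩ := h ε hε
    have hx0 : x ≠ 0 := by
      rintro rfl
      simp at hx
    have hn : 0 < ‖x‖ := norm_pos_iff.2 hx0
    refine ⟨((‖x‖⁻¹ : ℝ) : ℂ) • x, ?_, ?_⟩
    · rw [norm_smul]; simp [hn.ne']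
    · rw [map_smul, norm_smul]
      simp only [Complex.norm_real, norm_inv, norm_norm]
      rw [inv_mul_lt_iff₀ hn]
      linarith
  obtain ⟨φ, -, hφ_pos, hφ⟩ := exists_seq_strictAnti_tendsto (0 : ℝ)
  choose x hx1 hx2 using fun n => hK (φ n) (hφ_pos n)
  have hx_lim : Tendsto (fun n ↦ S (x n)) atTop (𝓝 0) :=
    squeeze_zero_norm (fun n => (hx2 n).le) hφ
  obtain ⟨K, hK, hK'⟩ := IsCompactOperator.image_closedBall_subset_compact
    (f := ((T.comp T : X →L[ℂ] X) : X →ₗ[ℂ] X)) hc 1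
  obtain ⟨y, hyK, ψ, hψ, hψy⟩ := hK.tendsto_subseq (x := fun n => T (T (x n)))
    (fun n ↦ hK' ⟨x n, by simp [hx1], rfl⟩)
  have hlim2 : Tendsto (fun n ↦ S (x (ψ n))) atTop (𝓝 0) := hx_lim.comp hψ.tendsto_atTop
  have hlim3 : Tendsto (fun n ↦ T (S (x (ψ n)))) atTop (𝓝 0) := by
    simpa [Function.comp_def] using (T.continuous.tendsto 0).comp hlim2
  have hxy : Tendsto (fun n => x (ψ n)) atTop (𝓝 y) := by
    have := (hψy.add hlim2).add hlim3
    simp only [add_zero] at this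
    refine this.congr fun n => ?_
    simp [hS]
    abel
  have hSy : S y = 0 := tendsto_nhds_unique ((S.continuous.tendsto y).comp hxy) hlim2
  have hy0 : y = 0 := hinj (by rw [hSy, map_zero])
  have : Tendsto (fun n => ‖x (ψ n)‖) atTop (𝓝 ‖y‖) := hxy.norm
  simp [hx1, hy0] at this

theorem aux_seq {X : Type*} [NormedAddCommGroup X] [NormedSpace ℂ X]
    (S : X →L[ℂ] X) (hns : ¬ Function.Surjective S)
    (hS : Topology.IsClosedEmbedding S) :
    ∃ (V : ℕ → Submodule ℂ X) (f : ℕ → X), Antitone V ∧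
      (∀ n, ∀ x ∈ V n, S x ∈ V (n + 1)) ∧ (∀ n, f n ∈ V n) ∧ (∀ n, ‖f n‖ ≤ 3) ∧
      (∀ n, ∀ y ∈ V (n + 1), 1 ≤ ‖f n - y‖) := by
  obtain ⟨V, hV0, hV⟩ : ∃ V : ℕ → Submodule ℂ X, V 0 = ⊤ ∧
      ∀ n, V (n + 1) = (V n).map (S : X →ₗ[ℂ] X) :=
    ⟨fun n => Nat.rec ⊤ (fun _ W => W.map (S : X →ₗ[ℂ] X)) n, rfl, fun _ => rfl⟩
  have hmem : ∀ n, ∀ x ∈ V n, S x ∈ V (n + 1) := by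
    intro n x hx
    rw [hV]
    exact ⟨x, hx, rfl⟩
  have hstep : ∀ n, V (n + 1) ≤ V n := by
    intro n
    induction n with
    | zero => rw [hV0]; exact le_top
    | succ n ih => 
      have h := Submodule.map_mono (f := (S : X →ₗ[ℂ] X)) ih
      rwa [← hV (n + 1), ← hV n] at h
  have hcl : ∀ n : ℕ, IsClosed (V n : Set X) := by
    intro n
    induction n with
    | zero => rw [hV0]; exact isClosed_univ
    | succ n ih =>
      have h := hS.isClosedMap _ ih
      rw [hV n, Submodule.map_coe]
      exact h
  have hne : ∀ n, ∃ x ∈ V n, x ∉ V (n + 1) := by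
    intro n
    induction n with
    | zero =>
      simp only [Function.Surjective, not_forall] at hns
      obtain ⟨b, hb⟩ := hns
      refine ⟨b, by rw [hV0]; trivial, ?_⟩
      rw [hV]
      rintro ⟨a, -, ha⟩
      exact hb ⟨a, ha⟩
    | succ n ih =>
      obtain ⟨x, hx, hx'⟩ := ih
      refine ⟨S x, hmem n x hx, ?_⟩
      rw [hV (n + 1)]
      rintro ⟨a, ha, hax⟩
      have : a = x := hS.injective hax
      exact hx' (this ▸ ha)
  have key : ∀ n, ∃ x ∈ V n, ‖x‖ ≤ 3 ∧ ∀ y ∈ V (n + 1), 1 ≤ ‖x - y‖ := by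
    intro n
    have h₁ : IsClosed ((V (n + 1)).comap (V n).subtype : Set (V n)) :=
      (hcl (n + 1)).preimage continuous_subtype_val
    have h₂ : ∃ x : V n, x ∉ (V (n + 1)).comap (V n).subtype := by
      obtain ⟨x, hx, hx'⟩ := hne n
      exact ⟨⟨x, hx⟩, hx'⟩
    obtain ⟨⟨x, hx⟩, hxn, hxy⟩ := riesz_lemma_of_norm_lt (c := (2 : ℂ)) (by norm_num)
      (R := 3) (by norm_num) h₁ h₂
    exact ⟨x, hx, hxn, fun y hy => hxy ⟨y, hstep n hy⟩ hy⟩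
  choose f hf1 hf2 hf3 using key
  exact ⟨V, f, antitone_nat_of_succ_le hstep, hmem, hf1, hf2, hf3⟩

/-- if `T` is a bounded operator on a complex Banach space whose square is
compact and `I - T` is injective, then `I - T` is surjective. -/
theorem fredholm_alternative_of_sq_compact
    {X : Type*} [NormedAddCommGroup X] [NormedSpace ℂ X] [CompleteSpace X]
    (T : X →L[ℂ] X) (hc : IsCompactOperator (T.comp T))
    (hinj : Function.Injective (ContinuousLinearMap.id ℂ X - T)) :
    Function.Surjective (ContinuousLinearMap.id ℂ X - T) := by
  obtain ⟨C, hC⟩ := aux_antilipschitz T hc hinj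
  by_contra hns
  obtain ⟨V, f, hV, hSV, hfV, hf3, hfar⟩ := aux_seq _ hns
    (hC.isClosedEmbedding (ContinuousLinearMap.uniformContinuous _))
  have hTV : ∀ n, ∀ x ∈ V n, T x ∈ V n := by
    intro n x hx
    have h := (V n).sub_mem hx (hV (Nat.le_succ n) (hSV n x hx))
    simpa using h
  have hp : ∀ m n, m < n → 1 ≤ ‖T (T (f m)) - T (T (f n))‖ := by
    intro m n hmn
    have h1 := hSV m _ ((V m).add_mem (hfV m) (hTV m _ (hfV m)))
    have h2 : T (T (f n)) ∈ V (m + 1) := hTV _ _ (hTV _ _ (hV hmn (hfV n)))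
    have h3 := hfar m _ ((V (m + 1)).add_mem h1 h2)
    convert h3 using 2
    simp
    abel
  obtain ⟨K, hK, hK'⟩ := IsCompactOperator.image_closedBall_subset_compact
    (f := ((T.comp T : X →L[ℂ] X) : X →ₗ[ℂ] X)) hc 3
  obtain ⟨y, hyK, ψ, hψ, hψy⟩ := hK.tendsto_subseq (x := fun n => T (T (f n)))
    (fun n ↦ hK' ⟨f n, by simp [hf3], rfl⟩)
  obtain ⟨N, hN⟩ := Metric.cauchySeq_iff'.1 hψy.cauchySeq 1 one_pos
  have h1 := hN (N + 1) (Nat.le_succ N)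
  rw [dist_comm, dist_eq_norm] at h1
  exact absurd (hp _ _ (hψ (Nat.lt_succ_self N))) (not_le.2 h1)
end

section
/- Let X be a complex Banach space and let T be a bounded linear operator on X such that T² is compact. Then every nonzero point of the spectrum σ(T) is an isolated point of σ(T); in particular, σ(T) \ {0} is discrete with 0 as the only possible accumulation point. -/
/-- A compact operator has only finitely many spectral values outside any disc around `0`. -/
theorem finite_spectrum_of_compact
    {X : Type*} [NormedAddCommGroup X] [NormedSpace ℂ X] [CompleteSpace X]
    (K : X →L[ℂ] X) (hK : IsCompactOperator K) (r : ℝ) (hr : 0 < r) :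
    {m : ℂ | m ∈ spectrum ℂ K ∧ r ≤ ‖m‖}.Finite := by
  by_contra hinf
  have hinf : {m : ℂ | m ∈ spectrum ℂ K ∧ r ≤ ‖m‖}.Infinite := hinf
  let e := hinf.natEmbedding
  let μ : ℕ → ℂ := fun n => (e n : ℂ)
  have hμinj : Function.Injective μ := Subtype.val_injective.comp e.injective
  have hμr : ∀ n, r ≤ ‖μ n‖ := fun n => (e n).2.2
  have hμ0 : ∀ n, μ n ≠ 0 := fun n h => by
    have := hμr n
    rw [h, norm_zero] at this
    linarith
  have hev : ∀ n, ∃ v, Module.End.HasEigenvector (K : Module.End ℂ X) (μ n) v := fun n =>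
    ((hK.hasEigenvalue_iff_mem_spectrum (hμ0 n)).2 (e n).2.1).exists_hasEigenvector
  choose v hv using hev
  have hKv : ∀ n, K (v n) = μ n • v n := fun n => (hv n).apply_eq_smul
  have hli : LinearIndependent ℂ v :=
    Module.End.eigenvectors_linearIndependent' (K : Module.End ℂ X) μ hμinj v hv
  let V : ℕ → Submodule ℂ X := fun n => Submodule.span ℂ (v '' Set.Iio n)
  have hVmono : ∀ {m n}, m ≤ n → V m ≤ V n := fun h =>
    Submodule.span_mono (Set.image_mono (Set.Iio_subset_Iio h))
  have hvmem : ∀ {m n}, m < n → v m ∈ V n := fun h => Submodule.subset_span ⟨_, h, rfl⟩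
  have hVfin : ∀ n, FiniteDimensional ℂ (V n) := fun n =>
    FiniteDimensional.span_of_finite ℂ ((Set.finite_Iio n).image v)
  have hVcl : ∀ n, IsClosed (V n : Set X) := fun n =>
    haveI := hVfin n
    Submodule.closed_of_finiteDimensional (V n)
  have hnot : ∀ n, v n ∉ V n := fun n => hli.notMem_span_image (by simp)
  have hstep : ∀ n, ∀ x ∈ V (n + 1), K x - μ n • x ∈ V n := by
    intro n x hx
    induction hx using Submodule.span_induction with
    | mem x hx =>
      obtain ⟨m, hm, rfl⟩ := hx
      rw [hKv, ← sub_smul]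
      rcases Nat.lt_succ_iff_lt_or_eq.1 hm with h | h
      · exact Submodule.smul_mem _ _ (hvmem h)
      · simp [h]
    | zero => simp
    | add x y _ _ hx hy =>
      have := Submodule.add_mem _ hx hy
      convert this using 1
      rw [map_add]
      module
    | smul a x _ hx =>
      have := Submodule.smul_mem _ a hx
      convert this using 1
      rw [map_smul]
      module
  have hinv : ∀ n, ∀ x ∈ V (n + 1), K x ∈ V (n + 1) := by
    intro n x hx
    have := Submodule.add_mem _ (hVmono (Nat.le_succ n) (hstep n x hx))
      (Submodule.smul_mem _ (μ n) hx)
    simpa using this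
  obtain ⟨c, hc⟩ := NormedField.exists_one_lt_norm ℂ
  have hx : ∀ n, ∃ x ∈ V (n + 1), ‖x‖ ≤ ‖c‖ + 1 ∧ ∀ y ∈ V n, 1 ≤ ‖x - y‖ := by
    intro n
    have h₁ : IsClosed ((V n).comap (V (n + 1)).subtype : Set (V (n + 1))) :=
      (hVcl n).preimage continuous_subtype_val
    obtain ⟨⟨x, hx⟩, hxn, hxy⟩ := riesz_lemma_of_norm_lt hc (lt_add_one ‖c‖) h₁
      ⟨⟨v n, hvmem (Nat.lt_succ_self n)⟩, hnot n⟩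
    exact ⟨x, hx, hxn, fun y hy => hxy ⟨y, hVmono (Nat.le_succ n) hy⟩ hy⟩
  choose f hfV hfn hfd using hx
  have hp : ∀ m n, m < n → r ≤ ‖K (f n) - K (f m)‖ := by
    intro m n hmn
    have hu : (μ n)⁻¹ • (K (f m) - (K (f n) - μ n • f n)) ∈ V n :=
      Submodule.smul_mem _ _ (Submodule.sub_mem _ (hVmono hmn (hinv m _ (hfV m)))
        (hstep n _ (hfV n)))
    have h1 := hfd n _ hu
    have h2 : K (f n) - K (f m) =
        μ n • (f n - (μ n)⁻¹ • (K (f m) - (K (f n) - μ n • f n))) := by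
      rw [smul_sub, smul_inv_smul₀ (hμ0 n)]
      abel
    rw [h2, norm_smul]
    nlinarith [hμr n]
  obtain ⟨S, hS, hS'⟩ := hK.image_closedBall_subset_compact (‖c‖ + 1)
  obtain ⟨y, hyS, ψ, hψ, hψy⟩ := hS.tendsto_subseq (fun n ↦ hS' ⟨f n, by simp [hfn], rfl⟩)
  replace hψy := hψy.cauchySeq
  rw [Metric.cauchySeq_iff'] at hψy
  obtain ⟨N, hN⟩ := hψy r hr
  have h3 : ‖K (f (ψ (N + 1))) - K (f (ψ N))‖ < r := by
    simpa [dist_eq_norm_sub] using hN (N + 1)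
  exact h3.not_ge (hp _ _ (hψ (Nat.lt_succ_self N)))



/-- if `T` is a bounded operator on a complex Banach space whose square is
compact, then every nonzero spectral value of `T` is an isolated point of the spectrum;
in particular no nonzero complex number is an accumulation point of the spectrum. -/
theorem isolated_spectrum_of_sq_compact
    {X : Type*} [NormedAddCommGroup X] [NormedSpace ℂ X] [CompleteSpace X]
    (T : X →L[ℂ] X) (hc : IsCompactOperator (T.comp T)) :
    (∀ l ∈ spectrum ℂ T, l ≠ 0 →
      ∃ ε : ℝ, 0 < ε ∧ Metric.ball l ε ∩ spectrum ℂ T = {l}) ∧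
    (∀ l : ℂ, l ≠ 0 → ¬ AccPt l (Filter.principal (spectrum ℂ T))) := by
  have key : ∀ l : ℂ, l ≠ 0 →
      ∃ ε : ℝ, 0 < ε ∧ ∀ z ∈ Metric.ball l ε, z ∈ spectrum ℂ T → z = l := by
    intro l hl
    have hl' : 0 < ‖l‖ := norm_pos_iff.2 hl
    have hfin : {z : ℂ | z ∈ spectrum ℂ T ∧ ‖l‖ / 2 ≤ ‖z‖}.Finite := by
      have h1 := finite_spectrum_of_compact (T.comp T) hc ((‖l‖ / 2) ^ 2) (by positivity)
      have h2 : ((fun z : ℂ => z ^ 2) ⁻¹'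
          {m : ℂ | m ∈ spectrum ℂ (T.comp T) ∧ (‖l‖ / 2) ^ 2 ≤ ‖m‖}).Finite := by
        refine h1.preimage' fun b _ => ?_
        refine ((Polynomial.nthRoots 2 b).toFinset.finite_toSet).subset fun z hz => ?_
        simpa [Polynomial.mem_nthRoots] using hz
      refine h2.subset fun z hz => ⟨?_, ?_⟩
      · have h3 := spectrum.pow_mem_pow T 2 hz.1
        rw [pow_two T] at h3
        exact h3
      · change (‖l‖ / 2) ^ 2 ≤ ‖z ^ 2‖
        rw [norm_pow]
        exact pow_le_pow_left₀ (by positivity) hz.2 2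
    have hcl := (hfin.subset (Set.diff_subset (t := {l}))).isClosed
    obtain ⟨ε, hε, hb⟩ := Metric.isOpen_iff.1 hcl.isOpen_compl l (by simp)
    refine ⟨min ε (‖l‖ / 2), by positivity, fun z hz hzs => ?_⟩
    by_contra hne
    have hz1 : dist z l < ε := lt_of_lt_of_le hz (min_le_left _ _)
    have hz2 : dist z l < ‖l‖ / 2 := lt_of_lt_of_le hz (min_le_right _ _)
    refine hb hz1 ⟨⟨hzs, ?_⟩, hne⟩
    rw [dist_eq_norm, norm_sub_rev] at hz2
    have := norm_sub_norm_le l z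
    linarith
  refine ⟨fun l hl hl0 => ?_, fun l hl0 hacc => ?_⟩
  · obtain ⟨ε, hε, h⟩ := key l hl0
    refine ⟨ε, hε, Set.Subset.antisymm (fun z hz => h z hz.1 hz.2) ?_⟩
    rintro _ rfl
    exact ⟨Metric.mem_ball_self hε, hl⟩
  · obtain ⟨ε, hε, h⟩ := key l hl0
    rw [accPt_iff_frequently] at hacc
    obtain ⟨z, ⟨hne, hzs⟩, hz⟩ :=
      (hacc.and_eventually (Metric.ball_mem_nhds l hε)).exists
    exact hne (h z hz hzs)
end

section
/- Let Ω ⊆ ℝ^d be a bounded open set and let μ assign to each z ∈ ∂Ω a positive finite Borel measure μ(z) on Ω with μ(z)(Ω) ≤ 1. Let u : Ω̄ → ℝ be continuous and satisfy u(z) ≤ ∫_Ω u(x) μ(z,dx) for all z ∈ ∂Ω. If c := max_{x ∈ Ω̄} u(x) > 0, then there exists x₀ ∈ Ω with u(x₀) = c. -/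
open MeasureTheory Set

/-- let `Ω ⊆ ℝ^d` be bounded and open and let `μ` assign to each boundary
point `z ∈ ∂Ω = closure Ω \ Ω` a positive Borel measure supported in `Ω` of total mass at
most `1`. If `u` is continuous on `closure Ω`, satisfies the nonlocal boundary inequality
`u(z) ≤ ∫_Ω u dμ(z)` for all `z ∈ ∂Ω`, and its maximum `c` over `closure Ω` is positive,
then this maximum is attained at some interior point `x₀ ∈ Ω`. -/
theorem interior_maximum_of_nonlocal_boundary_condition
    {d : ℕ} (Ω : Set (EuclideanSpace ℝ (Fin d)))
    (hΩo : IsOpen Ω) (hΩb : Bornology.IsBounded Ω)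
    (μ : EuclideanSpace ℝ (Fin d) → Measure (EuclideanSpace ℝ (Fin d)))
    (hsupp : ∀ z ∈ closure Ω \ Ω, μ z Ωᶜ = 0)
    (hmass : ∀ z ∈ closure Ω \ Ω, μ z Set.univ ≤ 1)
    (u : EuclideanSpace ℝ (Fin d) → ℝ) (hu : ContinuousOn u (closure Ω))
    (hbc : ∀ z ∈ closure Ω \ Ω, u z ≤ ∫ x in Ω, u x ∂(μ z))
    (c : ℝ) (hc : 0 < c) (hmax : ∀ x ∈ closure Ω, u x ≤ c)
    (hatt : ∃ x ∈ closure Ω, u x = c) :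
    ∃ x₀ ∈ Ω, u x₀ = c := by
  by_contra! hne
  obtain ⟨z, hzc, hz⟩ := hatt
  have hzΩ : z ∉ Ω := fun h => hne z h hz
  have hzb : z ∈ closure Ω \ Ω := ⟨hzc, hzΩ⟩
  have hb := hbc z hzb
  have hm := hmass z hzb
  rw [hz] at hb
  haveI : IsFiniteMeasure (μ z) := ⟨lt_of_le_of_lt hm ENNReal.one_lt_top⟩
  have hint : IntegrableOn u Ω (μ z) :=
    (hu.integrableOn_compact hΩb.isCompact_closure).mono_set subset_closure
  have hconst : IntegrableOn (fun _ : EuclideanSpace ℝ (Fin d) => c) Ω (μ z) :=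
    integrable_const c
  have hmΩ : (μ z).real Ω ≤ 1 := by
    have h1 : μ z Ω ≤ 1 := (measure_mono (subset_univ _)).trans hm
    exact ENNReal.toReal_le_of_le_ofReal zero_le_one (by simpa using h1)
  have hsub : ∫ x in Ω, (c - u x) ∂(μ z) ≤ 0 := by
    rw [integral_sub hconst hint, setIntegral_const, smul_eq_mul]
    nlinarith
  have hpos : 0 ≤ᵐ[(μ z).restrict Ω] fun x => c - u x := by
    filter_upwards [ae_restrict_mem hΩo.measurableSet] with x hx
    exact sub_nonneg.2 (hmax x (subset_closure hx))
  have hzero : ∫ x in Ω, (c - u x) ∂(μ z) = 0 :=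
    le_antisymm hsub (integral_nonneg_of_ae hpos)
  have hae := (integral_eq_zero_iff_of_nonneg_ae hpos (hconst.sub hint)).1 hzero
  have hfalse : ∀ᵐ x ∂((μ z).restrict Ω), False := by
    filter_upwards [hae, ae_restrict_mem hΩo.measurableSet] with x hx hxΩ
    exact hne x hxΩ (sub_eq_zero.1 hx).symm
  have hμ : (μ z).restrict Ω = 0 := by
    rw [← ae_eq_bot]
    exact Filter.eventually_false_iff_eq_bot.1 hfalse
  rw [hμ, integral_zero_measure] at hb
  linarith
end

section
/- Let K be a compact metric space and let T be a bounded positive linear operator on B_b(K). Then the following are equivalent: (i) T is a kernel operator, i.e. there exists a bounded positive kernel k on K with Tf(x) = ∫_K f(y) k(x,dy) for all f ∈ B_b(K) and x ∈ K; (ii) whenever (f_n) is a uniformly bounded sequence in B_b(K) converging pointwise to f ∈ B_b(K), then Tf_n converges pointwise to Tf; (iii) whenever (f_n) is a uniformly bounded increasing sequence of nonnegative functions in B_b(K) converging pointwise to f ∈ B_b(K), then Tf_n converges pointwise to Tf. -/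
open MeasureTheory ProbabilityTheory Filter Topology

variable {K : Type*} [MetricSpace K] [CompactSpace K] [MeasurableSpace K] [BorelSpace K]

/-- `f` belongs to `B_b(K)`: it is Borel measurable and bounded. -/
def IsBb (f : K → ℝ) : Prop := Measurable f ∧ ∃ C : ℝ, ∀ x, |f x| ≤ C

/-- `T` is a bounded linear operator on `B_b(K)`. -/
def IsBoundedLinearBb (T : (K → ℝ) → K → ℝ) : Prop :=
  (∀ f, IsBb f → IsBb (T f)) ∧
  (∀ f g, IsBb f → IsBb g → T (f + g) = T f + T g) ∧
  (∀ (c : ℝ) (f), IsBb f → T (c • f) = c • T f) ∧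
  (∃ C : ℝ, ∀ f, IsBb f → ∀ C' : ℝ, (∀ x, |f x| ≤ C') → ∀ x, |T f x| ≤ C * C')

/-- `T` is a positive operator on `B_b(K)`. -/
def IsPositiveBb (T : (K → ℝ) → K → ℝ) : Prop :=
  ∀ f, IsBb f → (∀ x, 0 ≤ f x) → ∀ x, 0 ≤ T f x

/-- `T` is a (positive) kernel operator on `B_b(K)`: it is given by integration against a
bounded positive kernel `k` on `K`. -/
def IsKernelOperator (T : (K → ℝ) → K → ℝ) : Prop :=
  ∃ k : Kernel K K, IsFiniteKernel k ∧ ∀ f, IsBb f → ∀ x, T f x = ∫ y, f y ∂(k x)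

theorem isBb_indicator {A : Set K} (hA : MeasurableSet A) (c : ℝ) :
    IsBb (A.indicator (fun _ => c)) := by
  refine ⟨measurable_const.indicator hA, |c|, fun x => ?_⟩
  by_cases h : x ∈ A <;> simp [h]

theorem isBb_integrable {f : K → ℝ} (hf : IsBb f) (μ : Measure K) [IsFiniteMeasure μ] :
    Integrable f μ := by
  obtain ⟨hm, C, hC⟩ := hf
  exact Integrable.of_bound hm.aestronglyMeasurable C (Eventually.of_forall hC)

theorem tendsto_integral_bb (μ : Measure K) [IsFiniteMeasure μ] (f : ℕ → K → ℝ) (g : K → ℝ)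
    (hf : ∀ n, IsBb (f n)) (hC : ∃ C : ℝ, ∀ n x, |f n x| ≤ C)
    (hlim : ∀ x, Tendsto (fun n => f n x) atTop (𝓝 (g x))) :
    Tendsto (fun n => ∫ y, f n y ∂μ) atTop (𝓝 (∫ y, g y ∂μ)) := by
  obtain ⟨C, hC⟩ := hC
  exact tendsto_integral_of_dominated_convergence (fun _ => C)
    (fun n => (hf n).1.aestronglyMeasurable) (integrable_const C)
    (fun n => Eventually.of_forall (hC n)) (Eventually.of_forall hlim)

theorem hasSum_T
    (T : (K → ℝ) → K → ℝ) (hlin : IsBoundedLinearBb T) (hpos : IsPositiveBb T)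
    (h3 : ∀ (f : ℕ → K → ℝ) (g : K → ℝ), (∀ n, IsBb (f n)) → IsBb g →
        (∀ n x, 0 ≤ f n x) → (∀ n x, f n x ≤ f (n + 1) x) →
        (∃ C : ℝ, ∀ n x, |f n x| ≤ C) →
        (∀ x, Tendsto (fun n => f n x) atTop (𝓝 (g x))) →
        ∀ x, Tendsto (fun n => T (f n) x) atTop (𝓝 (T g x)))
    (x : K) (A : ℕ → Set K) (hA : ∀ i, MeasurableSet (A i))
    (hd : Pairwise (Function.onFun Disjoint A)) :
    HasSum (fun i => T ((A i).indicator (fun _ => 1)) x)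
      (T ((⋃ i, A i).indicator (fun _ => 1)) x) := by
  have hnn : ∀ B : Set K, ∀ y, (0 : ℝ) ≤ B.indicator (fun _ => 1) y :=
    fun B y => Set.indicator_nonneg (fun _ _ => zero_le_one) y
  rw [hasSum_iff_tendsto_nat_of_nonneg
    (fun i => hpos _ (isBb_indicator (hA i) 1) (hnn _) x)]
  have hBm : ∀ n, MeasurableSet (⋃ i < n, A i) :=
    fun n => MeasurableSet.iUnion fun i => MeasurableSet.iUnion fun _ => hA i
  have hsum : ∀ n, ∑ i ∈ Finset.range n, T ((A i).indicator (fun _ => 1)) x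
      = T ((⋃ i < n, A i).indicator (fun _ => 1)) x := by
    intro n
    induction n with
    | zero =>
      have := hlin.2.2.1 0 _ (isBb_indicator (hBm 0) 1)
      have h0 : (⋃ i < 0, A i).indicator (fun _ => (1 : ℝ)) =
        (0 : ℝ) • (⋃ i < 0, A i).indicator (fun _ => (1 : ℝ)) := by ext; simp
      rw [h0, this]; simp
    | succ n ih =>
      rw [Finset.sum_range_succ, ih, Set.biUnion_lt_succ, Set.indicator_union_of_disjoint]
      · have := hlin.2.1 _ _ (isBb_indicator (hBm n) 1) (isBb_indicator (hA n) 1)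
        exact (congrFun this x).symm
      · simp only [Set.disjoint_iUnion_left]
        exact fun i hi => hd hi.ne
  simp_rw [hsum]
  have hmono : Monotone (fun n => ⋃ i < n, A i) := fun a b hab =>
    Set.biUnion_subset_biUnion_left fun i hi => lt_of_lt_of_le hi hab
  have hU : (⋃ n, ⋃ i < n, A i) = ⋃ i, A i := by
    ext y
    simp only [Set.mem_iUnion]
    exact ⟨fun ⟨_, i, _, h⟩ => ⟨i, h⟩, fun ⟨i, h⟩ => ⟨i + 1, i, Nat.lt_succ_self i, h⟩⟩
  refine h3 _ _ (fun n => isBb_indicator (hBm n) 1) (isBb_indicator (.iUnion hA) 1)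
    (fun n => hnn _) (fun n y => ?_) ⟨1, fun n y => ?_⟩ (fun y => ?_) x
  · exact Set.indicator_le_indicator_of_subset (hmono n.le_succ) (fun _ => zero_le_one) y
  · by_cases h : y ∈ ⋃ i < n, A i
    · rw [Set.indicator_of_mem h]; simp
    · rw [Set.indicator_of_notMem h]; simp
  · rw [← hU]
    exact (hmono.tendsto_indicator _ (fun _ => (1 : ℝ)) y).mono_right (pure_le_nhds _)

theorem kernel_of_monotone
    (T : (K → ℝ) → K → ℝ) (hlin : IsBoundedLinearBb T) (hpos : IsPositiveBb T)
    (h3 : ∀ (f : ℕ → K → ℝ) (g : K → ℝ), (∀ n, IsBb (f n)) → IsBb g →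
        (∀ n x, 0 ≤ f n x) → (∀ n x, f n x ≤ f (n + 1) x) →
        (∃ C : ℝ, ∀ n x, |f n x| ≤ C) →
        (∀ x, Tendsto (fun n => f n x) atTop (𝓝 (g x))) →
        ∀ x, Tendsto (fun n => T (f n) x) atTop (𝓝 (T g x))) : IsKernelOperator T := by
  have hnn : ∀ B : Set K, ∀ y, (0 : ℝ) ≤ B.indicator (fun _ => 1) y :=
    fun B y => Set.indicator_nonneg (fun _ _ => zero_le_one) y
  have hS := hasSum_T T hlin hpos h3
  have hTnn : ∀ A : Set K, MeasurableSet A → ∀ x, 0 ≤ T (A.indicator (fun _ => 1)) x :=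
    fun A hA x => hpos _ (isBb_indicator hA 1) (hnn A) x
  have hT0 : ∀ x, T (fun _ => 0) x = 0 := by
    intro x
    have := hlin.2.2.1 0 _ (isBb_indicator (K := K) MeasurableSet.empty 1)
    have h0 : (fun _ => 0) = (0 : ℝ) • (∅ : Set K).indicator (fun _ => (1 : ℝ)) := by
      ext; simp
    rw [h0, this]; simp
  let m : K → Measure K := fun x => Measure.ofMeasurable
    (fun A _ => ENNReal.ofReal (T (A.indicator (fun _ => 1)) x))
    (by simp [hT0])
    (by
      intro A hA hd
      have := hS x A hA hd
      rw [← this.tsum_eq, ENNReal.ofReal_tsum_of_nonneg (fun i => hTnn _ (hA i) x) this.summable])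
  have hm : ∀ x A, MeasurableSet A →
      m x A = ENNReal.ofReal (T (A.indicator (fun _ => 1)) x) :=
    fun x A hA => Measure.ofMeasurable_apply A hA
  let k : Kernel K K := ⟨m, Measure.measurable_of_measurable_coe _ fun A hA => by
    simp_rw [hm _ A hA]
    exact (hlin.1 _ (isBb_indicator hA 1)).1.ennreal_ofReal⟩
  have hk : IsFiniteKernel k := by
    obtain ⟨_, C, hC⟩ := hlin.1 _ (isBb_indicator (K := K) MeasurableSet.univ 1)
    refine ⟨ENNReal.ofReal C, ENNReal.ofReal_lt_top, fun x => ?_⟩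
    change m x Set.univ ≤ _
    rw [hm x _ MeasurableSet.univ]
    exact ENNReal.ofReal_le_ofReal ((le_abs_self _).trans (hC x))
  refine ⟨k, hk, ?_⟩
  have hind : ∀ (A : Set K) (hA : MeasurableSet A) (c : ℝ) (x : K),
      T (A.indicator (fun _ => c)) x = ∫ y, A.indicator (fun _ => c) y ∂(k x) := by
    intro A hA c x
    have h1 : A.indicator (fun _ => c) = c • A.indicator (fun _ => (1 : ℝ)) := by
      ext y; by_cases h : y ∈ A <;> simp [h]
    rw [integral_indicator hA, setIntegral_const, h1, hlin.2.2.1 c _ (isBb_indicator hA 1)]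
    have : (k x).real A = T (A.indicator (fun _ => 1)) x := by
      change (m x A).toReal = _
      rw [hm x A hA, ENNReal.toReal_ofReal (hTnn A hA x)]
    rw [this]; simp [mul_comm]
  have hBb : ∀ F : K → ENNReal, Measurable F → (∃ C : NNReal, ∀ y, F y ≤ C) →
      IsBb (fun y => (F y).toReal) := by
    rintro F hF ⟨C, hC⟩
    refine ⟨hF.ennreal_toReal, C, fun y => ?_⟩
    rw [abs_of_nonneg ENNReal.toReal_nonneg]
    exact ENNReal.toReal_le_coe_of_le_coe (hC y)
  have key : ∀ x (F : K → ENNReal), Measurable F → (∃ C : NNReal, ∀ y, F y ≤ C) →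
      T (fun y => (F y).toReal) x = ∫ y, (F y).toReal ∂(k x) := by
    intro x F hF
    refine Measurable.ennreal_induction
      (motive := fun F => (∃ C : NNReal, ∀ y, F y ≤ C) →
        T (fun y => (F y).toReal) x = ∫ y, (F y).toReal ∂(k x)) ?_ ?_ ?_ hF
    · intro c A hA _
      have : (fun y => (A.indicator (fun _ => c) y).toReal) =
          A.indicator (fun _ => c.toReal) := by
        ext y; by_cases h : y ∈ A <;> simp [h]
      rw [this]
      exact hind A hA _ x
    · rintro F G hd hF hG ihF ihG ⟨C, hC⟩
      have hCF : ∃ C : NNReal, ∀ y, F y ≤ C := ⟨C, fun y => le_self_add.trans (hC y)⟩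
      have hCG : ∃ C : NNReal, ∀ y, G y ≤ C := ⟨C, fun y => le_add_self.trans (hC y)⟩
      have e : (fun y => ((F + G) y).toReal) =
          (fun y => (F y).toReal) + (fun y => (G y).toReal) := by
        ext y
        obtain ⟨C1, h1⟩ := hCF
        obtain ⟨C2, h2⟩ := hCG
        exact ENNReal.toReal_add ((h1 y).trans_lt ENNReal.coe_lt_top).ne
          ((h2 y).trans_lt ENNReal.coe_lt_top).ne
      have bF := hBb F hF hCF
      have bG := hBb G hG hCG
      rw [e, hlin.2.1 _ _ bF bG, Pi.add_apply, ihF hCF, ihG hCG]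
      exact (integral_add (isBb_integrable bF _) (isBb_integrable bG _)).symm
    · rintro F hF hmono ih ⟨C, hC⟩
      have hFC : ∀ n y, F n y ≤ C := fun n y =>
        le_trans (le_iSup (fun n => F n y) n) (by simpa using hC y)
      have hb : ∀ n, IsBb (fun y => (F n y).toReal) := fun n => hBb _ (hF n) ⟨C, hFC n⟩
      have hbd : ∃ C : ℝ, ∀ n y, |(F n y).toReal| ≤ C := ⟨C, fun n y => by
        rw [abs_of_nonneg ENNReal.toReal_nonneg]
        exact ENNReal.toReal_le_coe_of_le_coe (hFC n y)⟩
      have hlim : ∀ y, Tendsto (fun n => (F n y).toReal) atTop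
          (𝓝 ((⨆ n, F n y).toReal)) := by
        intro y
        refine (ENNReal.tendsto_toReal ?_).comp
          (tendsto_atTop_iSup fun a b hab => hmono hab y)
        have := hC y
        exact ((iSup_le fun n => hFC n y).trans_lt ENNReal.coe_lt_top).ne
      have hsb : IsBb (fun y => (⨆ n, F n y).toReal) :=
        hBb _ (Measurable.iSup hF) ⟨C, fun y => iSup_le fun n => hFC n y⟩
      have t1 := h3 _ _ hb hsb (fun n y => ENNReal.toReal_nonneg)
        (fun n y => ENNReal.toReal_mono ((hFC _ y).trans_lt ENNReal.coe_lt_top).ne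
          (hmono n.le_succ y)) hbd hlim x
      have t2 := tendsto_integral_bb (k x) _ _ hb hbd hlim
      have e : ∀ n, T (fun y => (F n y).toReal) x = ∫ y, (F n y).toReal ∂(k x) :=
        fun n => ih n ⟨C, hFC n⟩
      simp_rw [e] at t1
      simpa using tendsto_nhds_unique t1 t2
  intro f hf x
  obtain ⟨hfm, C, hC⟩ := hf
  have hu := isBb_indicator (K := K) MeasurableSet.univ C
  have hg : IsBb (f + (Set.univ : Set K).indicator (fun _ => C)) := by
    refine ⟨hfm.add hu.1, C + C, fun y => ?_⟩
    have := abs_le.1 (hC y)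
    simp only [Pi.add_apply, Set.mem_univ, Set.indicator_of_mem]
    rw [abs_le]; constructor <;> linarith
  have hgn : ∀ y, 0 ≤ (f + (Set.univ : Set K).indicator (fun _ => C)) y := by
    intro y
    have := abs_le.1 (hC y)
    simp only [Pi.add_apply, Set.mem_univ, Set.indicator_of_mem]
    linarith
  have h := key x (fun y => ENNReal.ofReal ((f + (Set.univ : Set K).indicator (fun _ => C)) y))
    hg.1.ennreal_ofReal (by
      obtain ⟨_, D, hD⟩ := hg
      exact ⟨D.toNNReal, fun y => ENNReal.ofReal_le_ofReal ((le_abs_self _).trans (hD y))⟩)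
  simp_rw [ENNReal.toReal_ofReal (hgn _)] at h
  have hT := congrFun (hlin.2.1 f _ ⟨hfm, C, hC⟩ hu) x
  have hI := integral_add (isBb_integrable ⟨hfm, C, hC⟩ (k x)) (isBb_integrable hu (k x))
  have hi := hind Set.univ MeasurableSet.univ C x
  simp only [Pi.add_apply] at h hT
  have h' : T (f + (Set.univ : Set K).indicator (fun _ => C)) x = _ := h
  rw [hI] at h'
  linarith

/-- a bounded positive linear operator on `B_b(K)` is a kernel operator iff it
is pointwise continuous along uniformly bounded pointwise convergent sequences, iff it is
pointwise continuous along uniformly bounded increasing sequences of nonnegative functions. -/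
theorem kernel_operator_iff_pointwise_continuous
    (T : (K → ℝ) → K → ℝ) (hlin : IsBoundedLinearBb T) (hpos : IsPositiveBb T) :
    (IsKernelOperator T ↔
      (∀ (f : ℕ → K → ℝ) (g : K → ℝ), (∀ n, IsBb (f n)) → IsBb g →
        (∃ C : ℝ, ∀ n x, |f n x| ≤ C) →
        (∀ x, Tendsto (fun n => f n x) atTop (𝓝 (g x))) →
        ∀ x, Tendsto (fun n => T (f n) x) atTop (𝓝 (T g x)))) ∧
    (IsKernelOperator T ↔
      (∀ (f : ℕ → K → ℝ) (g : K → ℝ), (∀ n, IsBb (f n)) → IsBb g →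
        (∀ n x, 0 ≤ f n x) → (∀ n x, f n x ≤ f (n + 1) x) →
        (∃ C : ℝ, ∀ n x, |f n x| ≤ C) →
        (∀ x, Tendsto (fun n => f n x) atTop (𝓝 (g x))) →
        ∀ x, Tendsto (fun n => T (f n) x) atTop (𝓝 (T g x)))) := by
  have h12 : IsKernelOperator T → 
      (∀ (f : ℕ → K → ℝ) (g : K → ℝ), (∀ n, IsBb (f n)) → IsBb g →
        (∃ C : ℝ, ∀ n x, |f n x| ≤ C) →
        (∀ x, Tendsto (fun n => f n x) atTop (𝓝 (g x))) →
        ∀ x, Tendsto (fun n => T (f n) x) atTop (𝓝 (T g x))) := by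
    rintro ⟨k, hk, hT⟩ f g hf hg hC hlim x
    rw [hT g hg x]
    simp_rw [hT _ (hf _) x]
    exact tendsto_integral_bb (k x) f g hf hC hlim
  refine ⟨⟨h12, fun h => ?_⟩, ⟨fun h f g hf hg _ _ => h12 h f g hf hg, ?_⟩⟩
  · exact kernel_of_monotone T hlin hpos fun f g hf hg _ _ => h f g hf hg
  · exact kernel_of_monotone T hlin hpos
end

section
/- Let Ω ⊆ ℝ^d be a bounded open set which has infinitely many connected components (Ω_k)_{k∈ℕ}, and suppose the closures of the Ω_k are pairwise disjoint. Suppose μ assigns to each z ∈ ∂Ω a Borel probability measure μ(z) on Ω, such that μ(z)(Ω_k) = 1 for every k ∈ ℕ and every z ∈ ∂Ω_k. Then the map z ↦ μ(z) is not σ(M(Ω), C_b(Ω))-continuous, i.e. it is not continuous from ∂Ω into the Borel probability measures on Ω equipped with the weak topology generated by the bounded continuous functions on Ω. -/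
open MeasureTheory

/-- let `Ω ⊆ ℝ^d` be a bounded open set with infinitely many connected
components `Ω_k` (pairwise disjoint nonempty open connected sets with pairwise disjoint
closures whose union is `Ω`). Suppose `μ` assigns to each `z ∈ ∂Ω = closure Ω \ Ω` a Borel
probability measure on `Ω` such that `μ(z)(Ω_k) = 1` whenever `z ∈ ∂Ω_k`. Then `z ↦ μ(z)`
is not `σ(M(Ω), C_b(Ω))`-continuous on `∂Ω`: it is not the case that for every bounded
continuous function `f` on `Ω` the map `z ↦ ∫_Ω f dμ(z)` is continuous on `∂Ω`. -/
theorem no_weak_continuity_of_disconnected_components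
    {d : ℕ} (Ω : Set (EuclideanSpace ℝ (Fin d)))
    (hΩo : IsOpen Ω) (hΩb : Bornology.IsBounded Ω)
    (Ωc : ℕ → Set (EuclideanSpace ℝ (Fin d)))
    (hopen : ∀ k, IsOpen (Ωc k))
    (hne : ∀ k, (Ωc k).Nonempty)
    (hconn : ∀ k, IsPreconnected (Ωc k))
    (hunion : (⋃ k, Ωc k) = Ω)
    (hdisj : Pairwise fun i j => Disjoint (closure (Ωc i)) (closure (Ωc j)))
    (μ : EuclideanSpace ℝ (Fin d) → Measure (EuclideanSpace ℝ (Fin d)))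
    (hprob : ∀ z ∈ closure Ω \ Ω, IsProbabilityMeasure (μ z))
    (hsupp : ∀ z ∈ closure Ω \ Ω, μ z Ωᶜ = 0)
    (hjump : ∀ k, ∀ z ∈ closure (Ωc k) \ Ωc k, μ z (Ωc k) = 1) :
    ¬ ∀ f : EuclideanSpace ℝ (Fin d) → ℝ, ContinuousOn f Ω → (∃ C : ℝ, ∀ x ∈ Ω, |f x| ≤ C) →
        ContinuousOn (fun z => ∫ x in Ω, f x ∂(μ z)) (closure Ω \ Ω) := by
  intro H
  -- components are pairwise disjoint
  have hdj : ∀ i j, i ≠ j → ∀ x, x ∈ Ωc i → x ∈ closure (Ωc j) → False := fun i j hij x hi hj =>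
    Set.disjoint_left.1 (hdisj hij) (subset_closure hi) hj
  -- boundary points
  have hb : ∀ k, ∃ z, z ∈ closure (Ωc k) \ Ωc k := by
    intro k
    by_contra hcon
    push Not at hcon
    have hcl : IsClosed (Ωc k) := by
      apply isClosed_of_closure_subset
      intro x hx
      by_contra hxk
      exact hcon x ⟨hx, hxk⟩
    have huniv : Ωc k = Set.univ := IsClopen.eq_univ ⟨hcl, hopen k⟩ (hne k)
    obtain ⟨y, hy⟩ := hne (k + 1)
    exact hdj (k + 1) k (by omega) y hy (by rw [huniv]; simp)
  choose z hz using hb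
  have hsub : ∀ k, Ωc k ⊆ Ω := fun k => hunion ▸ Set.subset_iUnion Ωc k
  have hzΩ : ∀ k, z k ∈ closure Ω \ Ω := by
    intro k
    refine ⟨closure_mono (hsub k) (hz k).1, fun h => ?_⟩
    rw [← hunion] at h
    obtain ⟨j, hj⟩ := Set.mem_iUnion.1 h
    by_cases hjk : j = k
    · subst hjk; exact (hz j).2 hj
    · exact hdj j k hjk _ hj (hz k).1
  have hcpt : IsCompact (closure Ω \ Ω) := hΩb.isCompact_closure.diff hΩo
  obtain ⟨a, ha, φ, hφ, hlim⟩ := hcpt.tendsto_subseq hzΩ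
  -- the test function
  let A : Set ℕ := Set.range fun n => φ (2 * n)
  let U : Set ℕ → Set (EuclideanSpace ℝ (Fin d)) := fun B => ⋃ k ∈ B, Ωc k
  have hUo : ∀ B, IsOpen (U B) := fun B => isOpen_biUnion fun k _ => hopen k
  have hUd : ∀ B k x, k ∉ B → x ∈ Ωc k → x ∉ U B := by
    intro B k x hk hx hxU
    simp only [U, Set.mem_iUnion] at hxU
    obtain ⟨j, hj, hxj⟩ := hxU
    exact hdj j k (fun h => hk (h ▸ hj)) x hxj (subset_closure hx)
  have hUm : ∀ B k x, k ∈ B → x ∈ Ωc k → x ∈ U B := by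
    intro B k x hk hx
    simp only [U, Set.mem_iUnion]
    exact ⟨k, hk, hx⟩
  let f : EuclideanSpace ℝ (Fin d) → ℝ := (U A).indicator fun _ => 1
  have hfc : ContinuousOn f Ω := by
    intro x hx
    apply ContinuousAt.continuousWithinAt
    rw [← hunion] at hx
    obtain ⟨k, hk⟩ := Set.mem_iUnion.1 hx
    by_cases hkA : k ∈ A
    · have : f =ᶠ[nhds x] fun _ => 1 := by
        filter_upwards [(hopen k).mem_nhds hk] with y hy
        exact Set.indicator_of_mem (hUm A k y hkA hy) _
      exact continuousAt_const.congr this.symm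
    · have : f =ᶠ[nhds x] fun _ => 0 := by
        filter_upwards [(hopen k).mem_nhds hk] with y hy
        exact Set.indicator_of_notMem (hUd A k y hkA hy) _
      exact continuousAt_const.congr this.symm
  have hfb : ∃ C : ℝ, ∀ x ∈ Ω, |f x| ≤ C := by
    refine ⟨1, fun x _ => ?_⟩
    by_cases h : x ∈ U A <;> simp [f, h]
  have hcont := H f hfc hfb a ha
  have hint : ∀ k (c : ℝ), (∀ x ∈ Ωc k, f x = c) → ∫ x in Ω, f x ∂(μ (z k)) = c := by
    intro k c hc
    have := hprob _ (hzΩ k)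
    have hae : ∀ᵐ x ∂(μ (z k)), x ∈ Ωc k :=
      (prob_compl_eq_zero_iff (hopen k).measurableSet).2 (hjump k _ (hz k))
    have hΩae : ∀ᵐ x ∂(μ (z k)), x ∈ Ω := hsupp _ (hzΩ k)
    rw [Measure.restrict_eq_self_of_ae_mem hΩae]
    rw [integral_congr_ae (g := fun _ => c) (hae.mono fun x hx => hc x hx)]
    simp
  have hT : Filter.Tendsto (fun n => ∫ x in Ω, f x ∂(μ (z (φ n)))) Filter.atTop
      (nhds (∫ x in Ω, f x ∂(μ a))) :=
    Filter.Tendsto.comp hcont (tendsto_nhdsWithin_iff.2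
      ⟨hlim, Filter.Eventually.of_forall fun n => hzΩ (φ n)⟩)
  have he : Filter.Tendsto (fun n : ℕ => 2 * n) Filter.atTop Filter.atTop :=
    Filter.tendsto_atTop_mono (fun n => by simp only [id]; omega) Filter.tendsto_id
  have ho : Filter.Tendsto (fun n : ℕ => 2 * n + 1) Filter.atTop Filter.atTop :=
    Filter.tendsto_atTop_mono (fun n => by simp only [id]; omega) Filter.tendsto_id
  have h1 := hT.comp he
  have h0 := hT.comp ho
  have e1 : ((fun n => ∫ x in Ω, f x ∂(μ (z (φ n)))) ∘ fun n : ℕ => 2 * n) = fun _ => 1 := by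
    funext n
    exact hint _ 1 fun x hx => Set.indicator_of_mem (hUm A _ x ⟨n, rfl⟩ hx) _
  have e0 : ((fun n => ∫ x in Ω, f x ∂(μ (z (φ n)))) ∘ fun n : ℕ => 2 * n + 1) = fun _ => 0 := by
    funext n
    refine hint _ 0 fun x hx => Set.indicator_of_notMem (hUd A _ x ?_ hx) _
    rintro ⟨m, hm⟩
    have h2 : 2 * m = 2 * n + 1 := hφ.injective hm
    omega
  rw [e1] at h1
  rw [e0] at h0
  have q1 := tendsto_nhds_unique h1 tendsto_const_nhds
  have q0 := tendsto_nhds_unique h0 tendsto_const_nhds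
  linarith
end
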